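/- Let 1 ≤ N ≤ 4. Then the extremal solution u* of (P)_λ on the unit ball is regular, i.e. sup_B u* < 1. -/

import Mathlib

open MeasureTheory Metric Set Filter

/-- The Laplacian of `u : ℝ^N → ℝ`, as the sum of pure second partial derivatives. -/
noncomputable def lap {N : ℕ} (u : EuclideanSpace ℝ (Fin N) → ℝ) (x : EuclideanSpace ℝ (Fin N)) : ℝ :=
  ∑ i : Fin N, fderiv ℝ (fun y => fderiv ℝ u y (EuclideanSpace.single i 1)) x
    (EuclideanSpace.single i 1)

/-- The biharmonic operator `Δ²`. -/
noncomputable def biharm {N : ℕ} (u : EuclideanSpace ℝ (Fin N) → ℝ)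
    (x : EuclideanSpace ℝ (Fin N)) : ℝ :=
  lap (lap u) x

/-- A classical solution of `(P)_λ` on the unit ball `B ⊆ ℝ^N`:
`u ∈ C⁴(B̄)`, `0 < u < 1` in `B`, `Δ²u = λ (1-u)⁻²` in `B`, and `u = 0`, `∂_ν u = 0` on `∂B`. -/
structure IsClassicalSolution (N : ℕ) (lam : ℝ) (u : EuclideanSpace ℝ (Fin N) → ℝ) : Prop where
  contDiffOn : ContDiffOn ℝ 4 u (closedBall (0 : EuclideanSpace ℝ (Fin N)) 1)
  pos : ∀ x ∈ ball (0 : EuclideanSpace ℝ (Fin N)) 1, 0 < u x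
  lt_one : ∀ x ∈ ball (0 : EuclideanSpace ℝ (Fin N)) 1, u x < 1
  eqn : ∀ x ∈ ball (0 : EuclideanSpace ℝ (Fin N)) 1, biharm u x = lam / (1 - u x) ^ 2
  bdry : ∀ x : EuclideanSpace ℝ (Fin N), ‖x‖ = 1 → u x = 0
  bdry_deriv : ∀ x : EuclideanSpace ℝ (Fin N), ‖x‖ = 1 →
    fderivWithin ℝ u (closedBall (0 : EuclideanSpace ℝ (Fin N)) 1) x x = 0

/-- The set of voltages `λ > 0` for which `(P)_λ` admits a classical solution;
the pull-in voltage `λ*` is its supremum. -/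
def solSet (N : ℕ) : Set ℝ := {lam | 0 < lam ∧ ∃ u, IsClassicalSolution N lam u}

/-- `λ̄_N = (8/9)(N - 2/3)(N - 8/3)`. -/
noncomputable def lamBar (N : ℕ) : ℝ := (8 / 9) * ((N : ℝ) - 2 / 3) * ((N : ℝ) - 8 / 3)

/-!
By uniqueness of the minimal solution, `u_λ` is radial. For `λ < λ' < λ*`, Green's formula for
`u_λ` and `u_λ'`, together with the tangent line inequality for `(1 - s)⁻²`, gives
`∫ (u_λ' - u_λ) (3 u_λ - 1) (1 - u_λ)⁻³ ≤ 0`. Both `u_λ` and `u_λ' - u_λ` are radially decreasing,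
so by a Chebyshev-type argument the positive weight `u_λ' - u_λ` may be dropped. This bounds
`∫₀¹ rᴺ⁻¹ (1 - u_λ)⁻³ dr` by `4`, uniformly in `λ`.

For `N ≤ 4`, Young's inequality and repeated integration of the equation turn this bound into
`∂ᵣ Δu_λ ≤ C r^(-5/3)` and then `u_λ(0) - u_λ(r) ≤ C r^(4/3)`. Hence `(1 - u_λ)³` is at most a
multiple of `(1 - u_λ(0))³ + r⁴`, and the integral above could not stay bounded if `u_λ(0)` tended
to `1`. So `u_λ` stays away from `1` uniformly in `λ`.

The pull-in voltage is finite, as one sees by testing the equation against a bump function. It is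
positive because for small `λ` the radial equation is solved by a contraction.
-/

open Laplacian InnerProductSpace
open scoped Topology

section Laplacian

variable {N : ℕ} {u v : EuclideanSpace ℝ (Fin N) → ℝ} {x : EuclideanSpace ℝ (Fin N)}
  {s : Set (EuclideanSpace ℝ (Fin N))}

theorem lap_congr_nhds (h : u =ᶠ[𝓝 x] v) : lap u x = lap v x := by
  refine Finset.sum_congr rfl fun i _ => ?_
  have hi : (fun y => fderiv ℝ u y (EuclideanSpace.single i 1)) =ᶠ[𝓝 x]
      fun y => fderiv ℝ v y (EuclideanSpace.single i 1) :=
    h.fderiv.fun_comp fun f => f (EuclideanSpace.single i 1)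
  rw [hi.fderiv_eq]

theorem fderiv_fderiv_apply_eq_iteratedFDeriv {E F : Type*} [NormedAddCommGroup E]
    [NormedSpace ℝ E] [NormedAddCommGroup F] [NormedSpace ℝ F] {f : E → F} {x : E}
    (h : ContDiffAt ℝ 2 f x) (v w : E) :
    fderiv ℝ (fun y => fderiv ℝ f y w) x v = iteratedFDeriv ℝ 2 f x ![v, w] := by
  have hd : DifferentiableAt ℝ (fderiv ℝ f) x :=
    (h.fderiv_right (m := 1) (by norm_num)).differentiableAt one_ne_zero
  rw [iteratedFDeriv_two_apply, fderiv_clm_apply hd (differentiableAt_const w)]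
  simp

theorem laplacian_eq_sum_fderiv {E ι : Type*} [NormedAddCommGroup E] [InnerProductSpace ℝ E]
    [FiniteDimensional ℝ E] [Fintype ι] (b : OrthonormalBasis ι ℝ E) {f : E → ℝ} {x : E}
    (h : ContDiffAt ℝ 2 f x) :
    (Δ f) x = ∑ i, fderiv ℝ (fun y => fderiv ℝ f y (b i)) x (b i) := by
  rw [laplacian_eq_iteratedFDeriv_orthonormalBasis f b]
  exact Finset.sum_congr rfl fun i _ => (fderiv_fderiv_apply_eq_iteratedFDeriv h _ _).symm

theorem lap_eq_laplacian (h : ContDiffAt ℝ 2 u x) : lap u x = (Δ u) x := by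
  simp [laplacian_eq_sum_fderiv (EuclideanSpace.basisFun (Fin N) ℝ) h, lap]

theorem lap_comp_linearIsometryEquiv
    (R : EuclideanSpace ℝ (Fin N) ≃ₗᵢ[ℝ] EuclideanSpace ℝ (Fin N)) (h : ContDiffAt ℝ 2 u (R x)) :
    lap (u ∘ R) x = lap u (R x) := by
  have hR (w : EuclideanSpace ℝ (Fin N) → ℝ) (y v : EuclideanSpace ℝ (Fin N)) :
      fderiv ℝ (fun z => w (R z)) y v = fderiv ℝ w (R y) (R v) := by
    have := R.toContinuousLinearEquiv.comp_right_fderiv (f := w) (x := y)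
    exact congrArg (· v) this
  rw [lap_eq_laplacian h, laplacian_eq_sum_fderiv ((EuclideanSpace.basisFun (Fin N) ℝ).map R) h]
  refine Finset.sum_congr rfl fun i _ => ?_
  simp only [Function.comp_def, hR, OrthonormalBasis.map_apply, EuclideanSpace.basisFun_apply]
  exact hR (fun z => fderiv ℝ u z (R (EuclideanSpace.single i 1))) x _

theorem uniqueDiffOn_closedBall {E : Type*} [NormedAddCommGroup E] [NormedSpace ℝ E] (c : E)
    {r : ℝ} (hr : 0 < r) : UniqueDiffOn ℝ (closedBall c r) :=
  uniqueDiffOn_convex (convex_closedBall c r)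
    ⟨c, ball_subset_interior_closedBall (mem_ball_self hr)⟩

theorem contDiffOn_laplacianWithin {E : Type*} [NormedAddCommGroup E] [InnerProductSpace ℝ E]
    [FiniteDimensional ℝ E] {s : Set E} (hs : UniqueDiffOn ℝ s) {f : E → ℝ} {n : ℕ}
    (h : ContDiffOn ℝ (n + 2 : ℕ) f s) : ContDiffOn ℝ n (Δ[s] f) s := by
  refine ContDiffOn.congr (ContDiffOn.sum fun i _ => ?_) fun y hy =>
    laplacianWithin_eq_iteratedFDerivWithin_stdOrthonormalBasis f hs hy
  intro y hy
  have hD : ContDiffWithinAt ℝ n (iteratedFDerivWithin ℝ 2 f s) s y :=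
    (h y hy).iteratedFDerivWithin_right hs (by norm_cast) hy
  exact (ContinuousMultilinearMap.apply ℝ (fun _ : Fin 2 => E) ℝ
    _).contDiff.comp_contDiffWithinAt hD

theorem lap_eqOn_laplacianWithin (hs : UniqueDiffOn ℝ s) (h : ContDiffOn ℝ 2 u s) :
    EqOn (lap u) (Δ[s] u) (interior s) := by
  intro y hy
  have hys : s ∈ 𝓝 y := mem_interior_iff_mem_nhds.1 hy
  rw [lap_eq_laplacian (h.contDiffAt hys), ← laplacianWithin_univ,
    laplacianWithin_eq_iteratedFDerivWithin_stdOrthonormalBasis u hs (mem_of_mem_nhds hys),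
    laplacianWithin_eq_iteratedFDerivWithin_stdOrthonormalBasis u uniqueDiffOn_univ (mem_univ y),
    iteratedFDerivWithin_congr_set (eventuallyEq_univ.2 hys)]

theorem contDiffOn_lap {n : ℕ} (hs : IsOpen s) (h : ContDiffOn ℝ (n + 2 : ℕ) u s) :
    ContDiffOn ℝ n (lap u) s := by
  have h2 : ContDiffOn ℝ 2 u s := h.of_le (by norm_cast; omega)
  refine (contDiffOn_laplacianWithin hs.uniqueDiffOn h).congr ?_
  simpa only [hs.interior_eq, EqOn] using lap_eqOn_laplacianWithin hs.uniqueDiffOn h2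

theorem contDiff_lap {n : ℕ} (h : ContDiff ℝ (n + 2 : ℕ) u) : ContDiff ℝ n (lap u) :=
  contDiffOn_univ.1 (contDiffOn_lap isOpen_univ h.contDiffOn)

theorem sum_sq_apply_single (f : EuclideanSpace ℝ (Fin N) →L[ℝ] ℝ) :
    ∑ i, f (EuclideanSpace.single i 1) ^ 2 = ‖f‖ ^ 2 := by
  rw [← (toDual ℝ _).symm.norm_map f,
    ← (EuclideanSpace.basisFun (Fin N) ℝ).sum_sq_norm_inner_left]
  simp

theorem lap_comp {g g' : ℝ → ℝ} {g'' : ℝ} (hu : ContDiffAt ℝ 2 u x)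
    (hg : ∀ᶠ t in 𝓝 (u x), HasDerivAt g (g' t) t) (hg' : HasDerivAt g' g'' (u x)) :
    lap (fun y => g (u y)) x = g'' * ‖fderiv ℝ u x‖ ^ 2 + g' (u x) * lap u x := by
  have hd : DifferentiableAt ℝ u x := hu.differentiableAt two_ne_zero
  have hgrad : ∀ᶠ y in 𝓝 x, fderiv ℝ (fun z => g (u z)) y = g' (u y) • fderiv ℝ u y := by
    filter_upwards [hd.continuousAt.eventually hg, hu.eventually (by simp)] with y hy huy
    exact (hy.comp_hasFDerivAt y (huy.differentiableAt two_ne_zero).hasFDerivAt).fderiv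
  have hpure (v : EuclideanSpace ℝ (Fin N)) :
      fderiv ℝ (fun y => fderiv ℝ (fun z => g (u z)) y v) x v =
        g'' * fderiv ℝ u x v ^ 2 + g' (u x) * fderiv ℝ (fun y => fderiv ℝ u y v) x v := by
    have hv : DifferentiableAt ℝ (fun y => fderiv ℝ u y v) x :=
      ((hu.fderiv_right (m := 1) (by norm_num)).differentiableAt one_ne_zero).clm_apply
        (differentiableAt_const v)
    have := (hg'.comp_hasFDerivAt x hd.hasFDerivAt).mul hv.hasFDerivAt
    have hgradv : (fun y => fderiv ℝ (fun z => g (u z)) y v) =ᶠ[𝓝 x]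
        fun y => (g' ∘ u) y * fderiv ℝ u y v := hgrad.mono fun y hy => congrArg (· v) hy
    rw [hgradv.fderiv_eq]
    refine (congrArg (· v) this.fderiv).trans ?_
    simp
    ring
  simp only [lap, hpure, Finset.sum_add_distrib, ← Finset.mul_sum,
    sum_sq_apply_single]

theorem lap_norm_sq : lap (fun y : EuclideanSpace ℝ (Fin N) => ‖y‖ ^ 2) x = 2 * N := by
  have hgrad (y v : EuclideanSpace ℝ (Fin N)) :
      fderiv ℝ (fun z : EuclideanSpace ℝ (Fin N) => ‖z‖ ^ 2) y v = 2 * inner ℝ v y := by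
    simp [real_inner_comm]
  have hlin (v : EuclideanSpace ℝ (Fin N)) :
      fderiv ℝ (fun y => 2 * inner ℝ v y) x v = 2 * inner ℝ v v := by
    have := ((innerSL ℝ v).hasFDerivAt (x := x)).const_mul 2
    exact congrArg (· v) this.fderiv
  simp only [lap, hgrad, hlin]
  simp [mul_comm]

theorem lap_comp_norm_sq {g g' : ℝ → ℝ} {g'' : ℝ}
    (hg : ∀ᶠ t in 𝓝 (‖x‖ ^ 2), HasDerivAt g (g' t) t) (hg' : HasDerivAt g' g'' (‖x‖ ^ 2)) :
    lap (fun y => g (‖y‖ ^ 2)) x = 4 * ‖x‖ ^ 2 * g'' + 2 * N * g' (‖x‖ ^ 2) := by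
  have hgrad : ‖fderiv ℝ (fun y : EuclideanSpace ℝ (Fin N) => ‖y‖ ^ 2) x‖ = 2 * ‖x‖ := by
    rw [fderiv_norm_sq_apply, ← Nat.cast_smul_eq_nsmul ℝ, norm_smul, innerSL_apply_norm]
    simp
  rw [lap_comp (contDiff_norm_sq ℝ).contDiffAt hg hg', lap_norm_sq, hgrad]
  ring

theorem lap_norm (hx : x ≠ 0) : lap (‖·‖) x = (N - 1) / ‖x‖ := by
  have hpos : 0 < ‖x‖ := norm_pos_iff.2 hx
  have hpos2 : 0 < ‖x‖ ^ 2 := pow_pos hpos 2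
  have hsqrt : ∀ᶠ t in 𝓝 (‖x‖ ^ 2), HasDerivAt Real.sqrt (2 * √t)⁻¹ t :=
    (lt_mem_nhds hpos2).mono fun t ht => by simpa using Real.hasDerivAt_sqrt ht.ne'
  have hsqrt' := ((Real.hasDerivAt_sqrt hpos2.ne').const_mul 2).inv (by positivity)
  have key := lap_comp_norm_sq hsqrt hsqrt'
  simp only [Real.sqrt_sq (norm_nonneg _)] at key
  rw [key]
  field_simp
  ring

theorem lap_comp_norm {g g' : ℝ → ℝ} {g'' : ℝ} (hx : x ≠ 0)
    (hg : ∀ᶠ t in 𝓝 ‖x‖, HasDerivAt g (g' t) t) (hg' : HasDerivAt g' g'' ‖x‖) :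
    lap (fun y => g ‖y‖) x = g'' + (N - 1) / ‖x‖ * g' ‖x‖ := by
  have hnorm : ContDiffAt ℝ 2 (‖·‖) x := contDiffAt_norm ℝ hx
  have : Nontrivial (EuclideanSpace ℝ (Fin N)) := ⟨x, 0, hx⟩
  rw [lap_comp hnorm hg hg', lap_norm hx, norm_fderiv_norm (hnorm.differentiableAt two_ne_zero)]
  ring

end Laplacian

section PullInVoltageFinite

theorem integrable_mul_of_tsupport_subset {E : Type*} [NormedAddCommGroup E] [MeasurableSpace E]
    [OpensMeasurableSpace E] {μ : Measure E} [IsFiniteMeasureOnCompacts μ] {φ w : E → ℝ} {s : Set E}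
    (hs : IsOpen s) (hφ : Continuous φ) (hc : HasCompactSupport φ) (hsub : tsupport φ ⊆ s)
    (hw : ContinuousOn w s) : Integrable (fun x => φ x * w x) μ := by
  refine (continuous_of_tsupport fun x hx => ?_).integrable_of_hasCompactSupport hc.mul_right
  have hxφ : x ∈ tsupport φ := closure_mono (Function.support_mul_subset_left φ w) hx
  exact hφ.continuousAt.mul (hw.continuousAt (hs.mem_nhds (hsub hxφ)))

theorem integral_mul_fderiv_eq_neg_of_tsupport_subset {E : Type*} [NormedAddCommGroup E]
    [NormedSpace ℝ E] [FiniteDimensional ℝ E] [MeasurableSpace E] [BorelSpace E] {μ : Measure E}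
    [μ.IsAddHaarMeasure] {φ w : E → ℝ} {s : Set E} (hs : IsOpen s) (hφ : ContDiff ℝ 1 φ)
    (hc : HasCompactSupport φ) (hsub : tsupport φ ⊆ s) (hw : ContDiffOn ℝ 1 w s) (v : E) :
    ∫ x, φ x * fderiv ℝ w x v ∂μ = -∫ x, fderiv ℝ φ x v * w x ∂μ := by
  have hφ' : Continuous (fun x => fderiv ℝ φ x v) :=
    (hφ.continuous_fderiv one_ne_zero).clm_apply continuous_const
  have hw' : ContinuousOn (fun x => fderiv ℝ w x v) s :=
    (hw.continuousOn_fderiv_of_isOpen hs le_rfl).clm_apply continuousOn_const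
  exact integral_mul_fderiv_eq_neg_fderiv_mul_of_integrable
    (integrable_mul_of_tsupport_subset hs hφ' (hc.fderiv_apply ℝ v)
      ((tsupport_fderiv_apply_subset ℝ v).trans hsub) hw.continuousOn)
    (integrable_mul_of_tsupport_subset hs hφ.continuous hc hsub hw')
    (integrable_mul_of_tsupport_subset hs hφ.continuous hc hsub hw.continuousOn)
    (fun x _ => hφ.differentiable one_ne_zero x)
    (fun x hx => (hw.differentiableOn one_ne_zero).differentiableAt (hs.mem_nhds (hsub hx)))

variable {N : ℕ} {φ w : EuclideanSpace ℝ (Fin N) → ℝ} {s : Set (EuclideanSpace ℝ (Fin N))}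

theorem integral_mul_lap_eq_integral_lap_mul (hs : IsOpen s) (hφ : ContDiff ℝ 2 φ)
    (hc : HasCompactSupport φ) (hsub : tsupport φ ⊆ s) (hw : ContDiffOn ℝ 2 w s) :
    ∫ x, φ x * lap w x = ∫ x, lap φ x * w x := by
  have hw' (v) : ContDiffOn ℝ 1 (fun x => fderiv ℝ w x v) s :=
    (hw.fderiv_of_isOpen hs (by norm_num)).clm_apply contDiffOn_const
  have hφ' (v) : ContDiff ℝ 1 (fun x => fderiv ℝ φ x v) :=
    (hφ.fderiv_right (by norm_num)).clm_apply contDiff_const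
  have hsub' (v) := (tsupport_fderiv_apply_subset ℝ v (f := φ)).trans hsub
  simp only [lap, Finset.mul_sum, Finset.sum_mul]
  rw [integral_finsetSum, integral_finsetSum]
  · refine Finset.sum_congr rfl fun i _ => ?_
    rw [integral_mul_fderiv_eq_neg_of_tsupport_subset hs (hφ.of_le one_le_two) hc hsub (hw' _),
      integral_mul_fderiv_eq_neg_of_tsupport_subset hs (hφ' _) (hc.fderiv_apply ℝ _) (hsub' _)
        (hw.of_le one_le_two), neg_neg]
  · intro i _
    exact integrable_mul_of_tsupport_subset hs
      (((hφ' _).continuous_fderiv one_ne_zero).clm_apply continuous_const)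
      ((hc.fderiv_apply ℝ _).fderiv_apply ℝ _)
      ((tsupport_fderiv_apply_subset ℝ _).trans (hsub' _)) hw.continuousOn
  · intro i _
    exact integrable_mul_of_tsupport_subset hs hφ.continuous hc hsub
      (((hw' _).continuousOn_fderiv_of_isOpen hs le_rfl).clm_apply continuousOn_const)

theorem tsupport_lap_subset : tsupport (lap φ) ⊆ tsupport φ := by
  refine closure_minimal (fun x hx => ?_) (isClosed_tsupport φ)
  by_contra hφx
  refine hx ?_
  rw [lap_congr_nhds (notMem_tsupport_iff_eventuallyEq.1 hφx)]
  simp [lap]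

theorem integral_mul_biharm_eq_integral_biharm_mul (hs : IsOpen s) (hφ : ContDiff ℝ 4 φ)
    (hc : HasCompactSupport φ) (hsub : tsupport φ ⊆ s) (hw : ContDiffOn ℝ 4 w s) :
    ∫ x, φ x * biharm w x = ∫ x, biharm φ x * w x := by
  have hcl : HasCompactSupport (lap φ) := hc.mono' (subset_closure.trans tsupport_lap_subset)
  rw [show biharm w = lap (lap w) from rfl, show biharm φ = lap (lap φ) from rfl,
    integral_mul_lap_eq_integral_lap_mul hs (hφ.of_le (by norm_num)) hc hsub
      (contDiffOn_lap (n := 2) hs hw),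
    integral_mul_lap_eq_integral_lap_mul hs (contDiff_lap (n := 2) hφ) hcl
      (tsupport_lap_subset.trans hsub) (hw.of_le (by norm_num))]

theorem IsClassicalSolution.le_biharm {lam : ℝ} {u} (hu : IsClassicalSolution N lam u)
    (hlam : 0 ≤ lam) {x} (hx : x ∈ ball (0 : EuclideanSpace ℝ (Fin N)) 1) : lam ≤ biharm u x := by
  have h0 := hu.pos x hx
  have h1 := hu.lt_one x hx
  rw [hu.eqn x hx]
  exact le_div_self hlam (by nlinarith) (by nlinarith)

/-- Test the equation against a bump function and move `Δ²` onto it. -/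
theorem IsClassicalSolution.mul_integral_le {lam : ℝ} {u} (hu : IsClassicalSolution N lam u)
    (hlam : 0 ≤ lam) (hφ : ContDiff ℝ 4 φ) (hc : HasCompactSupport φ) (hφ0 : 0 ≤ φ)
    (hsub : tsupport φ ⊆ ball 0 1) : lam * ∫ x, φ x ≤ ∫ x, |biharm φ x| := by
  have hu4 : ContDiffOn ℝ 4 u (ball 0 1) := hu.contDiffOn.mono ball_subset_closedBall
  have hsub' : tsupport (biharm φ) ⊆ ball 0 1 :=
    tsupport_lap_subset.trans (tsupport_lap_subset.trans hsub)
  have hc' : HasCompactSupport (biharm φ) :=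
    hc.mono' (subset_closure.trans (tsupport_lap_subset.trans tsupport_lap_subset))
  have hbφ : Continuous (biharm φ) := (contDiff_lap (n := 0) (contDiff_lap (n := 2) hφ)).continuous
  have hbu : ContinuousOn (biharm u) (ball 0 1) :=
    (contDiffOn_lap (n := 0) isOpen_ball (contDiffOn_lap (n := 2) isOpen_ball hu4)).continuousOn
  calc lam * ∫ x, φ x = ∫ x, φ x * lam := by rw [integral_mul_const, mul_comm]
    _ ≤ ∫ x, φ x * biharm u x := by
      refine integral_mono ((hφ.continuous.integrable_of_hasCompactSupport hc).mul_const lam)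
        (integrable_mul_of_tsupport_subset isOpen_ball hφ.continuous hc hsub hbu) fun x => ?_
      by_cases hx : x ∈ tsupport φ
      · exact mul_le_mul_of_nonneg_left (hu.le_biharm hlam (hsub hx)) (hφ0 x)
      · simp [image_eq_zero_of_notMem_tsupport hx]
    _ = ∫ x, biharm φ x * u x :=
      integral_mul_biharm_eq_integral_biharm_mul isOpen_ball hφ hc hsub hu4
    _ ≤ ∫ x, |biharm φ x| := by
      refine integral_mono (integrable_mul_of_tsupport_subset isOpen_ball hbφ hc' hsub'
        hu4.continuousOn) (hbφ.integrable_of_hasCompactSupport hc').abs fun x => ?_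
      by_cases hx : x ∈ tsupport (biharm φ)
      · refine (le_abs_self _).trans ?_
        rw [abs_mul, abs_of_pos (hu.pos x (hsub' hx))]
        exact mul_le_of_le_one_right (abs_nonneg _) (hu.lt_one x (hsub' hx)).le
      · simp [image_eq_zero_of_notMem_tsupport hx]

theorem bddAbove_solSet (N : ℕ) : BddAbove (solSet N) := by
  let φ : ContDiffBump (0 : EuclideanSpace ℝ (Fin N)) := ⟨1 / 4, 1 / 2, by norm_num, by norm_num⟩
  have hsub : tsupport φ ⊆ ball (0 : EuclideanSpace ℝ (Fin N)) 1 := by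
    rw [φ.tsupport_eq]
    exact closedBall_subset_ball (by norm_num)
  refine ⟨(∫ x, |biharm φ x|) / ∫ x, φ x, ?_⟩
  rintro lam ⟨hlam, u, hu⟩
  rw [le_div_iff₀ φ.integral_pos]
  exact hu.mul_integral_le hlam.le φ.contDiff φ.hasCompactSupport (fun _ => φ.nonneg) hsub

end PullInVoltageFinite

section RadialMean

/-- The weighted mean `∫₀¹ σⁿ φ(tσ²) dσ`. With `t = r²` it is `r⁻⁽ⁿ⁺¹⁾ ∫₀ʳ sⁿ φ(s²) ds`, the radial
derivative, divided by `r`, of the solution of `Δv = φ(|x|²)` in dimension `n + 1`. -/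
noncomputable def radialMean (n : ℕ) (φ : ℝ → ℝ) (t : ℝ) : ℝ :=
  ∫ σ in (0 : ℝ)..1, σ ^ n * φ (t * σ ^ 2)

variable {n : ℕ} {φ φ' ψ : ℝ → ℝ} {C t : ℝ}

theorem continuous_radialMean (hφ : Continuous φ) : Continuous (radialMean n φ) :=
  intervalIntegral.continuous_parametric_intervalIntegral_of_continuous' (by fun_prop) _ _

theorem hasDerivAt_radialMean (hφ : ∀ t, HasDerivAt φ (φ' t) t) (hφ' : Continuous φ') (t : ℝ) :
    HasDerivAt (radialMean n φ) (radialMean (n + 2) φ' t) t := by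
  have hc : Continuous φ := continuous_iff_continuousAt.2 fun t => (hφ t).continuousAt
  obtain ⟨C, hC⟩ := ((isCompact_closedBall t 1).prod (isCompact_Icc (a := (0 : ℝ)) (b := 1)))
    |>.exists_bound_of_continuousOn (f := fun q => q.2 ^ (n + 2) * φ' (q.1 * q.2 ^ 2))
    (by fun_prop)
  refine (intervalIntegral.hasDerivAt_integral_of_dominated_loc_of_deriv_le (bound := fun _ => C)
    (F' := fun t σ => σ ^ (n + 2) * φ' (t * σ ^ 2)) (ball_mem_nhds t one_pos)
    (Eventually.of_forall fun x => (by fun_prop : Continuous _).aestronglyMeasurable)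
    ((by fun_prop : Continuous _).intervalIntegrable _ _)
    ((by fun_prop : Continuous _).aestronglyMeasurable)
    (Eventually.of_forall fun σ hσ x hx => ?_) (by simp)
    (Eventually.of_forall fun σ _ x _ => ?_)).2
  · rw [uIoc_of_le zero_le_one] at hσ
    exact hC (x, σ) ⟨ball_subset_closedBall hx, Ioc_subset_Icc_self hσ⟩
  · have h := ((hφ (x * σ ^ 2)).comp x ((hasDerivAt_id x).mul_const (σ ^ 2))).const_mul (σ ^ n)
    exact h.congr_deriv (by ring)

theorem contDiff_succ_of_hasDerivAt {k : ℕ} {f f' : ℝ → ℝ} (h : ∀ t, HasDerivAt f (f' t) t)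
    (h' : ContDiff ℝ k f') : ContDiff ℝ (k + 1 : ℕ) f := by
  push_cast
  refine contDiff_succ_iff_deriv.2 ⟨fun t => (h t).differentiableAt, by simp, ?_⟩
  rwa [show deriv f = f' from funext fun t => (h t).deriv]

theorem contDiff_radialMean {k : ℕ} (hφ : ContDiff ℝ k φ) : ContDiff ℝ k (radialMean n φ) := by
  induction k generalizing n φ with
  | zero => exact contDiff_zero.2 (continuous_radialMean hφ.continuous)
  | succ k ih =>
    have hderiv : ContDiff ℝ k (deriv φ) := hφ.deriv'
    have hd (t : ℝ) : HasDerivAt φ (deriv φ t) t := (hφ.differentiable (by simp) t).hasDerivAt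
    exact contDiff_succ_of_hasDerivAt (hasDerivAt_radialMean hd hderiv.continuous) (ih hderiv)

/-- Integrate `d/dσ (σⁿ⁺¹ φ(tσ²))` over `[0, 1]`. -/
theorem two_mul_radialMean_add (hφ : ∀ t, HasDerivAt φ (φ' t) t) (hφ' : Continuous φ') (t : ℝ) :
    2 * t * radialMean (n + 2) φ' t + (n + 1) * radialMean n φ t = φ t := by
  have hc : Continuous φ := continuous_iff_continuousAt.2 fun t => (hφ t).continuousAt
  have hd (σ : ℝ) : HasDerivAt (fun σ => σ ^ (n + 1) * φ (t * σ ^ 2))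
      (2 * t * (σ ^ (n + 2) * φ' (t * σ ^ 2)) + (n + 1) * (σ ^ n * φ (t * σ ^ 2))) σ := by
    have h := (hasDerivAt_pow (n + 1) σ).mul
      ((hφ (t * σ ^ 2)).comp σ ((hasDerivAt_pow 2 σ).const_mul t))
    exact h.congr_deriv (by simp; ring)
  have h := intervalIntegral.integral_eq_sub_of_hasDerivAt (a := 0) (b := 1) (fun σ _ => hd σ)
    ((by fun_prop : Continuous _).intervalIntegrable _ _)
  rw [intervalIntegral.integral_add ((by fun_prop : Continuous _).intervalIntegrable _ _)
    ((by fun_prop : Continuous _).intervalIntegrable _ _), intervalIntegral.integral_const_mul,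
    intervalIntegral.integral_const_mul] at h
  simpa [radialMean] using h

theorem mul_sq_mem_Icc {σ : ℝ} (ht : t ∈ Icc (0 : ℝ) 1) (hσ : σ ∈ Icc (0 : ℝ) 1) :
    t * σ ^ 2 ∈ Icc (0 : ℝ) 1 :=
  ⟨mul_nonneg ht.1 (sq_nonneg σ), mul_le_one₀ ht.2 (sq_nonneg σ) (pow_le_one₀ hσ.1 hσ.2)⟩

theorem abs_radialMean_sub_le (hφ : Continuous φ) (hψ : Continuous ψ)
    (h : ∀ s ∈ Icc (0 : ℝ) 1, |φ s - ψ s| ≤ C) (ht : t ∈ Icc (0 : ℝ) 1) :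
    |radialMean n φ t - radialMean n ψ t| ≤ C := by
  rw [radialMean, radialMean, ← intervalIntegral.integral_sub
    ((by fun_prop : Continuous _).intervalIntegrable _ _)
    ((by fun_prop : Continuous _).intervalIntegrable _ _)]
  rw [← Real.norm_eq_abs]
  refine (intervalIntegral.norm_integral_le_of_norm_le_const (C := C)
    fun σ hσ => ?_).trans_eq (by simp)
  rw [uIoc_of_le zero_le_one] at hσ
  have hσ' : σ ∈ Icc (0 : ℝ) 1 := Ioc_subset_Icc_self hσ
  rw [← mul_sub, norm_mul, Real.norm_of_nonneg (pow_nonneg hσ'.1 n), Real.norm_eq_abs]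
  exact (mul_le_of_le_one_left (abs_nonneg _) (pow_le_one₀ hσ'.1 hσ'.2)).trans
    (h _ (mul_sq_mem_Icc ht hσ'))

theorem radialMean_pos (hφ : Continuous φ) (hpos : ∀ s ∈ Icc (0 : ℝ) 1, 0 < φ s)
    (ht : t ∈ Icc (0 : ℝ) 1) : 0 < radialMean n φ t :=
  intervalIntegral.intervalIntegral_pos_of_pos_on
    ((by fun_prop : Continuous _).intervalIntegrable _ _)
    (fun σ hσ => mul_pos (pow_pos hσ.1 n)
      (hpos _ (mul_sq_mem_Icc ht (Ioo_subset_Icc_self hσ)))) one_pos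

/-- The radial solution operator of `Δv = φ(|x|²)` in dimension `n + 1`, in the variable
`t = |x|²` and normalised by `v(0) = 0`. -/
noncomputable def radialPotential (n : ℕ) (φ : ℝ → ℝ) (t : ℝ) : ℝ :=
  ∫ s in (0 : ℝ)..t, 1 / 2 * radialMean n φ s

theorem hasDerivAt_radialPotential (hφ : Continuous φ) (t : ℝ) :
    HasDerivAt (radialPotential n φ) (1 / 2 * radialMean n φ t) t :=
  (continuous_const.mul (continuous_radialMean hφ)).integral_hasStrictDerivAt 0 t |>.hasDerivAt

theorem contDiff_radialPotential {k : ℕ} (hφ : ContDiff ℝ k φ) :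
    ContDiff ℝ (k + 1 : ℕ) (radialPotential n φ) :=
  contDiff_succ_of_hasDerivAt (hasDerivAt_radialPotential hφ.continuous)
    (contDiff_const.mul (contDiff_radialMean hφ))

theorem continuous_radialPotential (hφ : Continuous φ) : Continuous (radialPotential n φ) :=
  (contDiff_radialPotential (contDiff_zero.2 hφ)).continuous

theorem lap_radialPotential (hφ : ∀ t, HasDerivAt φ (φ' t) t) (hφ' : Continuous φ') (a b : ℝ)
    (x : EuclideanSpace ℝ (Fin (n + 1))) :
    lap (fun y => radialPotential n φ (‖y‖ ^ 2) + a * ‖y‖ ^ 2 + b) x =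
      φ (‖x‖ ^ 2) + 2 * (n + 1) * a := by
  have hc : Continuous φ := continuous_iff_continuousAt.2 fun t => (hφ t).continuousAt
  rw [lap_comp_norm_sq (g := fun t => radialPotential n φ t + a * t + b)
    (g' := fun t => 1 / 2 * radialMean n φ t + a)
    (Eventually.of_forall fun t => by
      simpa using
        ((hasDerivAt_radialPotential hc t).add ((hasDerivAt_id t).const_mul a)).add_const b)
    (((hasDerivAt_radialMean hφ hφ' _).const_mul (1 / 2)).add_const a),
    ← two_mul_radialMean_add (n := n) hφ hφ' (‖x‖ ^ 2)]
  push_cast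
  ring

theorem abs_radialPotential_sub_le (hφ : Continuous φ) (hψ : Continuous ψ)
    (h : ∀ s ∈ Icc (0 : ℝ) 1, |φ s - ψ s| ≤ C) (ht : t ∈ Icc (0 : ℝ) 1) :
    |radialPotential n φ t - radialPotential n ψ t| ≤ 1 / 2 * C := by
  have hM {χ : ℝ → ℝ} (hχ : Continuous χ) :
      IntervalIntegrable (fun s => 1 / 2 * radialMean n χ s) volume 0 t :=
    (continuous_const.mul (continuous_radialMean hχ)).intervalIntegrable _ _
  have hC : 0 ≤ C := (abs_nonneg _).trans (h t ht)
  rw [radialPotential, radialPotential, ← intervalIntegral.integral_sub (hM hφ) (hM hψ)]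
  rw [← Real.norm_eq_abs]
  refine (intervalIntegral.norm_integral_le_of_norm_le_const (C := 1 / 2 * C)
    fun s hs => ?_).trans ?_
  · rw [uIoc_of_le ht.1] at hs
    rw [← mul_sub, norm_mul, Real.norm_eq_abs (_ - _), Real.norm_of_nonneg (by norm_num)]
    gcongr
    exact abs_radialMean_sub_le hφ hψ h ⟨hs.1.le, hs.2.trans ht.2⟩
  · rw [sub_zero, abs_of_nonneg ht.1]
    exact mul_le_of_le_one_right (by positivity) ht.2

end RadialMean

section ClampedPotential

variable {n : ℕ} {φ ψ : ℝ → ℝ} {C t : ℝ}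

/-- The radial solution operator of the clamped problem `Δ²v = φ(|x|²)`, `v = ∂_ν v = 0` on the unit
sphere of dimension `n + 1`, in the variable `t = |x|²`: the twofold potential of `φ`, corrected by
an affine function of `|x|²`. -/
noncomputable def clampedPotential (n : ℕ) (φ : ℝ → ℝ) (t : ℝ) : ℝ :=
  radialPotential n (radialPotential n φ) t - radialPotential n (radialPotential n φ) 1 -
    1 / 2 * radialMean n (radialPotential n φ) 1 * (t - 1)

@[simp]
theorem clampedPotential_one : clampedPotential n φ 1 = 0 := by
  simp [clampedPotential]

theorem hasDerivAt_clampedPotential (hφ : Continuous φ) (t : ℝ) :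
    HasDerivAt (clampedPotential n φ) (1 / 2 * radialMean n (radialPotential n φ) t -
      1 / 2 * radialMean n (radialPotential n φ) 1) t := by
  have hP := hasDerivAt_radialPotential (n := n) (continuous_radialPotential (n := n) hφ) t
  have hlin := ((hasDerivAt_id t).sub_const 1).const_mul
    (1 / 2 * radialMean n (radialPotential n φ) 1)
  exact ((hP.sub_const _).sub hlin).congr_deriv (by simp)

theorem contDiff_clampedPotential {k : ℕ} (hφ : ContDiff ℝ k φ) :
    ContDiff ℝ (k + 2 : ℕ) (clampedPotential n φ) :=
  contDiff_succ_of_hasDerivAt (hasDerivAt_clampedPotential hφ.continuous)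
    ((contDiff_const.mul (contDiff_radialMean (contDiff_radialPotential hφ))).sub contDiff_const)

theorem abs_clampedPotential_sub_le (hφ : Continuous φ) (hψ : Continuous ψ)
    (h : ∀ s ∈ Icc (0 : ℝ) 1, |φ s - ψ s| ≤ C) (ht : t ∈ Icc (0 : ℝ) 1) :
    |clampedPotential n φ t - clampedPotential n ψ t| ≤ C := by
  have h1 : (1 : ℝ) ∈ Icc (0 : ℝ) 1 := right_mem_Icc.2 zero_le_one
  have hφP := continuous_radialPotential (n := n) hφ
  have hψP := continuous_radialPotential (n := n) hψ
  have hP : ∀ s ∈ Icc (0 : ℝ) 1, |radialPotential n φ s - radialPotential n ψ s| ≤ 1 / 2 * C :=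
    fun s hs => abs_radialPotential_sub_le hφ hψ h hs
  have hPt := abs_le.1 (abs_radialPotential_sub_le (n := n) hφP hψP hP ht)
  have hP1 := abs_le.1 (abs_radialPotential_sub_le (n := n) hφP hψP hP h1)
  have hM := abs_le.1 (abs_radialMean_sub_le (n := n) hφP hψP hP h1)
  simp only [clampedPotential]
  rw [abs_le]
  constructor <;> nlinarith [ht.1, ht.2]

theorem abs_clampedPotential_le (hφ : Continuous φ) (h : ∀ s ∈ Icc (0 : ℝ) 1, |φ s| ≤ C)
    (ht : t ∈ Icc (0 : ℝ) 1) : |clampedPotential n φ t| ≤ C := by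
  have h0 : clampedPotential n 0 t = 0 := by simp [clampedPotential, radialPotential, radialMean]
  have h' : ∀ s ∈ Icc (0 : ℝ) 1, |φ s - (0 : ℝ → ℝ) s| ≤ C := by simpa using h
  simpa [h0] using abs_clampedPotential_sub_le (n := n) hφ continuous_zero h' ht

theorem clampedPotential_congr (hφ : Continuous φ) (hψ : Continuous ψ)
    (h : EqOn φ ψ (Icc 0 1)) : EqOn (clampedPotential n φ) (clampedPotential n ψ) (Icc 0 1) := by
  intro t ht
  have h0 := abs_clampedPotential_sub_le (n := n) (C := 0) hφ hψ (fun s hs => by simp [h hs]) ht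
  exact sub_eq_zero.1 (abs_nonpos_iff.1 h0)

theorem strictAntiOn_clampedPotential (hφ : Continuous φ) (hpos : ∀ s ∈ Icc (0 : ℝ) 1, 0 < φ s) :
    StrictAntiOn (clampedPotential n φ) (Icc 0 1) := by
  have hM := continuous_radialMean (n := n) hφ
  have hP : ∀ s ∈ Icc (0 : ℝ) 1, 0 < 1 / 2 * radialMean n φ s := fun s hs =>
    mul_pos one_half_pos (radialMean_pos hφ hpos hs)
  have hmono : StrictMonoOn (radialMean n (radialPotential n φ)) (Icc 0 1) := by
    refine strictMonoOn_of_hasDerivWithinAt_pos (convex_Icc 0 1)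
      (continuous_radialMean (continuous_radialPotential hφ)).continuousOn
      (fun s _ => (hasDerivAt_radialMean (hasDerivAt_radialPotential hφ) (by fun_prop)
        s).hasDerivWithinAt) fun s hs => ?_
    exact radialMean_pos (by fun_prop) hP (interior_subset hs)
  refine strictAntiOn_of_hasDerivWithinAt_neg (convex_Icc 0 1)
    (contDiff_clampedPotential (contDiff_zero.2 hφ)).continuous.continuousOn
    (fun s _ => (hasDerivAt_clampedPotential hφ s).hasDerivWithinAt) fun s hs => ?_
  rw [interior_Icc] at hs
  linarith [hmono (Ioo_subset_Icc_self hs) (right_mem_Icc.2 zero_le_one) hs.2]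

theorem clampedPotential_pos (hφ : Continuous φ) (hpos : ∀ s ∈ Icc (0 : ℝ) 1, 0 < φ s)
    (ht : t ∈ Ico (0 : ℝ) 1) : 0 < clampedPotential n φ t := by
  simpa using strictAntiOn_clampedPotential hφ hpos (Ico_subset_Icc_self ht)
    (right_mem_Icc.2 zero_le_one) ht.2

theorem biharm_clampedPotential (hφ : ContDiff ℝ 1 φ) (x : EuclideanSpace ℝ (Fin (n + 1))) :
    biharm (fun y => clampedPotential n φ (‖y‖ ^ 2)) x = φ (‖x‖ ^ 2) := by
  have hd (t : ℝ) : HasDerivAt φ (deriv φ t) t := (hφ.differentiable one_ne_zero t).hasDerivAt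
  have hM := continuous_radialMean (n := n) hφ.continuous
  set c := 1 / 2 * radialMean n (radialPotential n φ) 1 with hc
  have hlap : lap (fun y : EuclideanSpace ℝ (Fin (n + 1)) => clampedPotential n φ (‖y‖ ^ 2)) =
      fun y => radialPotential n φ (‖y‖ ^ 2) + 0 * ‖y‖ ^ 2 + 2 * (n + 1) * -c := by
    ext y
    rw [zero_mul, add_zero, ← lap_radialPotential (hasDerivAt_radialPotential hφ.continuous)
      (by fun_prop) (-c) (c - radialPotential n (radialPotential n φ) 1) y]
    congr 1 with z
    rw [clampedPotential, ← hc]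
    ring
  rw [biharm, hlap, lap_radialPotential hd (hφ.continuous_deriv le_rfl)]
  ring

end ClampedPotential

section SmallSolutions

open scoped ContDiff NNReal

theorem contDiff_mul_of_tsupport_subset {E : Type*} [NormedAddCommGroup E] [NormedSpace ℝ E]
    {n : WithTop ℕ∞} {b f : E → ℝ} {s : Set E} (hs : IsOpen s) (hb : ContDiff ℝ n b)
    (hsub : tsupport b ⊆ s) (hf : ContDiffOn ℝ n f s) : ContDiff ℝ n fun x => b x * f x := by
  refine contDiff_iff_contDiffAt.2 fun x => ?_
  by_cases hx : x ∈ tsupport b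
  · exact hb.contDiffAt.mul (hf.contDiffAt (hs.mem_nhds (hsub hx)))
  · refine contDiffAt_const (c := (0 : ℝ)) |>.congr_of_eventuallyEq ?_
    filter_upwards [notMem_tsupport_iff_eventuallyEq.1 hx] with y hy
    simp [hy]

theorem exists_contDiff_lipschitzWith_pos_eqOn {E : Type*} [NormedAddCommGroup E]
    [NormedSpace ℝ E] [FiniteDimensional ℝ E] {n : ℕ∞} (hn : n ≠ 0) {f : E → ℝ} {c : E} {r R : ℝ}
    (hr : 0 < r) (hrR : r < R) (hf : ContDiffOn ℝ n f (ball c R))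
    (hpos : ∀ x ∈ ball c R, 0 < f x) :
    ∃ F : E → ℝ, ContDiff ℝ n F ∧ (∀ x, 0 < F x) ∧ (∃ C, ∀ x, F x ≤ C) ∧
      (∃ L, LipschitzWith L F) ∧ EqOn F f (closedBall c r) := by
  let b : ContDiffBump c := ⟨r, (r + R) / 2, hr, by linarith⟩
  have hsub : tsupport b ⊆ ball c R := by
    rw [b.tsupport_eq]
    exact closedBall_subset_ball (by simp only [b]; linarith)
  have hG : ContDiff ℝ n fun x => b x * (f x - 1) :=
    contDiff_mul_of_tsupport_subset isOpen_ball b.contDiff hsub (hf.sub contDiffOn_const)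
  have hGc : HasCompactSupport fun x => b x * (f x - 1) := b.hasCompactSupport.mul_right
  refine ⟨fun x => b x * (f x - 1) + 1, hG.add contDiff_const, fun x => ?_, ?_, ?_, fun x hx => ?_⟩
  · have hb : b x ≤ 1 := b.le_one
    rcases (b.nonneg (x := x)).eq_or_lt with h0 | h0
    · simp [← h0]
    · have := hpos x (hsub (subset_tsupport b h0.ne'))
      nlinarith [mul_pos h0 this]
  · obtain ⟨C, hC⟩ := hGc.exists_bound_of_continuous hG.continuous
    exact ⟨C + 1, fun x => add_le_add_left ((le_abs_self _).trans (hC x)) 1⟩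
  · obtain ⟨L, hL⟩ := hG.lipschitzWith_of_hasCompactSupport hGc (by exact_mod_cast hn)
    exact ⟨_, hL.add (LipschitzWith.const 1)⟩
  · simp [b.one_of_mem_closedBall hx]

variable {n : ℕ}

theorem exists_fixedPoint_clampedPotential {F : ℝ → ℝ} {L lam : ℝ≥0} (hF : LipschitzWith L F)
    (hlam : lam * L < 1) : ∃ φ : ℝ → ℝ, Continuous φ ∧
      ∀ t ∈ Icc (0 : ℝ) 1, φ t = lam * F (clampedPotential n φ t) := by
  let ext (φ : C(Icc (0 : ℝ) 1, ℝ)) : C(ℝ, ℝ) := φ.IccExtend zero_le_one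
  have hS (φ : C(ℝ, ℝ)) : Continuous fun t => lam * F (clampedPotential n φ t) :=
    continuous_const.mul (hF.continuous.comp
      (contDiff_clampedPotential (contDiff_zero.2 φ.continuous)).continuous)
  let T (φ : C(Icc (0 : ℝ) 1, ℝ)) : C(Icc (0 : ℝ) 1, ℝ) :=
    ⟨fun t => lam * F (clampedPotential n (ext φ) t), (hS (ext φ)).comp continuous_subtype_val⟩
  have hT : ContractingWith (lam * L) T := by
    refine ⟨hlam, LipschitzWith.of_dist_le_mul fun φ ψ => ?_⟩
    refine (ContinuousMap.dist_le (by positivity)).2 fun t => ?_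
    have hle : |clampedPotential n (ext φ) t - clampedPotential n (ext ψ) t| ≤ dist φ ψ :=
      abs_clampedPotential_sub_le (ext φ).continuous (ext ψ).continuous
        (fun s _ => (Real.dist_eq _ _).symm.trans_le
          (ContinuousMap.dist_apply_le_dist (projIcc 0 1 zero_le_one s))) t.2
    calc dist (T φ t) (T ψ t)
        = lam * dist (F (clampedPotential n (ext φ) t)) (F (clampedPotential n (ext ψ) t)) := by
          simp [T, Real.dist_eq, ← mul_sub, abs_mul]
      _ ≤ lam * (L * dist φ ψ) := by
          gcongr
          exact (hF.dist_le_mul _ _).trans (by gcongr; exact hle)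
      _ = (lam * L : ℝ≥0) * dist φ ψ := by push_cast; ring
  let φ := hT.fixedPoint T
  refine ⟨ext φ, (ext φ).continuous, fun t ht => ?_⟩
  have hfix : T φ ⟨t, ht⟩ = φ ⟨t, ht⟩ := by rw [hT.fixedPoint_isFixedPt]
  simpa [T, ext, IccExtend_of_mem _ _ ht] using hfix.symm

theorem exists_contDiff_clampedPotential_eqn {f : ℝ → ℝ} {r R : ℝ} (hr : 0 < r) (hrR : r < R)
    (hf : ContDiffOn ℝ 2 f (ball 0 R)) (hpos : ∀ s ∈ ball (0 : ℝ) R, 0 < f s) :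
    ∃ lam > 0, ∃ φ : ℝ → ℝ, ContDiff ℝ 2 φ ∧ ∀ t ∈ Icc (0 : ℝ) 1,
      0 < φ t ∧ |clampedPotential n φ t| ≤ r ∧ φ t = lam * f (clampedPotential n φ t) := by
  obtain ⟨F, hF, hF0, ⟨C, hC⟩, ⟨L, hL⟩, hFf⟩ :=
    exists_contDiff_lipschitzWith_pos_eqOn (n := 2) two_ne_zero hr hrR hf hpos
  obtain ⟨lam, hlam0, hlam⟩ : ∃ lam : ℝ≥0, 0 < lam ∧ lam * L < 1 ∧ lam * C ≤ r := by
    have hL : Tendsto (fun lam : ℝ≥0 => lam * L) (𝓝[>] 0) (𝓝 0) :=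
      ((continuous_id.mul continuous_const).tendsto' 0 0 (by simp)).mono_left nhdsWithin_le_nhds
    have hC : Tendsto (fun lam : ℝ≥0 => lam * C) (𝓝[>] 0) (𝓝 0) :=
      Continuous.tendsto' (by fun_prop) 0 0 (by simp) |>.mono_left nhdsWithin_le_nhds
    exact (eventually_mem_nhdsWithin.and ((hL.eventually_lt_const one_pos).and
      (hC.eventually_le_const hr))).exists
  obtain ⟨φ, hφ, hfix⟩ := exists_fixedPoint_clampedPotential (n := n) hL hlam.1
  have hreg : ContDiff ℝ 2 fun t => lam * F (clampedPotential n φ t) :=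
    contDiff_const.mul (hF.comp (contDiff_clampedPotential (k := 0) (contDiff_zero.2 hφ)))
  have hS := clampedPotential_congr (n := n) hφ hreg.continuous hfix
  have hbound : ∀ t ∈ Icc (0 : ℝ) 1, |clampedPotential n φ t| ≤ r := by
    refine fun t ht => (abs_clampedPotential_le hφ (fun s hs => ?_) ht).trans hlam.2
    rw [hfix s hs, abs_of_pos (mul_pos (NNReal.coe_pos.2 hlam0) (hF0 _))]
    gcongr
    exact hC _
  refine ⟨lam, hlam0, _, hreg, fun t ht => ⟨mul_pos (NNReal.coe_pos.2 hlam0) (hF0 _), ?_⟩⟩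
  rw [← hS ht]
  exact ⟨hbound t ht, by rw [hFf (by simpa using hbound t ht)]⟩

theorem solSet_nonempty (N : ℕ) (hN : 1 ≤ N) : (solSet N).Nonempty := by
  obtain ⟨n, rfl⟩ := Nat.exists_eq_add_of_le' hN
  have hf : ContDiffOn ℝ 2 (fun s : ℝ => 1 / (1 - s) ^ 2) (ball 0 1) := by
    refine contDiffOn_const.div ((contDiffOn_const.sub contDiffOn_id).pow 2) fun s hs => ?_
    have := (abs_lt.1 (mem_ball_zero_iff.1 hs)).2
    exact pow_ne_zero 2 (sub_pos.2 this).ne'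
  have hf0 : ∀ s ∈ ball (0 : ℝ) 1, 0 < 1 / (1 - s) ^ 2 := fun s hs => by
    have := (abs_lt.1 (mem_ball_zero_iff.1 hs)).2
    have : 0 < 1 - s := sub_pos.2 this
    positivity
  obtain ⟨lam, hlam, φ, hφ, h⟩ :=
    exists_contDiff_clampedPotential_eqn (n := n) one_half_pos one_half_lt_one hf hf0
  have hsq : ∀ x ∈ ball (0 : EuclideanSpace ℝ (Fin (n + 1))) 1, ‖x‖ ^ 2 ∈ Ico (0 : ℝ) 1 :=
    fun x hx => ⟨by positivity, pow_lt_one₀ (norm_nonneg x) (mem_ball_zero_iff.1 hx) two_ne_zero⟩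
  have hu : ContDiff ℝ 4 fun x : EuclideanSpace ℝ (Fin (n + 1)) => clampedPotential n φ (‖x‖ ^ 2) :=
    (contDiff_clampedPotential (k := 2) hφ).comp (contDiff_norm_sq ℝ)
  refine ⟨lam, hlam, fun x => clampedPotential n φ (‖x‖ ^ 2), hu.contDiffOn, fun x hx => ?_,
    fun x hx => ?_, fun x hx => ?_, fun x hx => ?_, fun x hx => ?_⟩
  · exact clampedPotential_pos hφ.continuous (fun s hs => (h s hs).1) (hsq x hx)
  · linarith [(abs_le.1 (h _ (Ico_subset_Icc_self (hsq x hx))).2.1).2]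
  · rw [biharm_clampedPotential (hφ.of_le one_le_two),
      (h _ (Ico_subset_Icc_self (hsq x hx))).2.2, mul_one_div]
  · simp [hx]
  · have hd := (hasDerivAt_clampedPotential (n := n) hφ.continuous (‖x‖ ^ 2)).comp_hasFDerivAt x
      (hasStrictFDerivAt_norm_sq x).hasFDerivAt
    have hxu : UniqueDiffWithinAt ℝ (closedBall 0 1) x :=
      uniqueDiffOn_closedBall 0 one_pos x (by simp [hx])
    refine (congrArg (· x) (hd.hasFDerivWithinAt.fderivWithin hxu)).trans ?_
    simp [hx]

end SmallSolutions

section RadialProfile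

variable {m : ℕ} {lam : ℝ} {p q h k f g p₁ q₁ h₁ k₁ f₁ p₂ q₂ h₂ k₂ f₂ : ℝ → ℝ}

/-- As functions of `r = |x|` in the unit ball of dimension `m + 1`, `q` is the radial derivative of
`p` and `h` is its Laplacian `r⁻ᵐ (rᵐ q)'`, all three being continuous up to the boundary. -/
structure IsRadialLaplacian (m : ℕ) (p q h : ℝ → ℝ) : Prop where
  continuousOn : ContinuousOn p (Icc 0 1)
  continuousOn_deriv : ContinuousOn q (Icc 0 1)
  continuousOn_lap : ContinuousOn h (Icc 0 1)
  deriv_zero : q 0 = 0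
  hasDerivAt : ∀ r ∈ Ioo (0 : ℝ) 1, HasDerivAt p (q r) r
  hasDerivAt_flux : ∀ r ∈ Ioo (0 : ℝ) 1, HasDerivAt (fun s => s ^ m * q s) (r ^ m * h r) r

namespace IsRadialLaplacian

theorem sub (H₁ : IsRadialLaplacian m p₁ q₁ h₁) (H₂ : IsRadialLaplacian m p₂ q₂ h₂) :
    IsRadialLaplacian m (p₁ - p₂) (q₁ - q₂) (h₁ - h₂) where
  continuousOn := H₁.continuousOn.sub H₂.continuousOn
  continuousOn_deriv := H₁.continuousOn_deriv.sub H₂.continuousOn_deriv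
  continuousOn_lap := H₁.continuousOn_lap.sub H₂.continuousOn_lap
  deriv_zero := by simp [H₁.deriv_zero, H₂.deriv_zero]
  hasDerivAt r hr := (H₁.hasDerivAt r hr).sub (H₂.hasDerivAt r hr)
  hasDerivAt_flux r hr := by
    simp only [Pi.sub_apply, mul_sub]
    exact (H₁.hasDerivAt_flux r hr).sub (H₂.hasDerivAt_flux r hr)

theorem congr_lap (H : IsRadialLaplacian m p q h) (hg : ContinuousOn g (Icc 0 1))
    (hgh : EqOn h g (Ioo 0 1)) : IsRadialLaplacian m p q g where
  __ := H
  continuousOn_lap := hg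
  hasDerivAt_flux r hr := hgh hr ▸ H.hasDerivAt_flux r hr

theorem continuousOn_flux (H : IsRadialLaplacian m p q h) :
    ContinuousOn (fun r => r ^ m * q r) (Icc 0 1) :=
  (continuous_pow m).continuousOn.mul H.continuousOn_deriv

theorem integral_lap (H : IsRadialLaplacian m p q h) {r : ℝ} (hr : r ∈ Icc (0 : ℝ) 1) :
    ∫ s in (0 : ℝ)..r, s ^ m * h s = r ^ m * q r := by
  have hsub : Icc 0 r ⊆ Icc (0 : ℝ) 1 := Icc_subset_Icc_right hr.2
  have hc : ContinuousOn (fun s => s ^ m * h s) (Icc 0 r) :=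
    (continuous_pow m).continuousOn.mul (H.continuousOn_lap.mono hsub)
  rw [intervalIntegral.integral_eq_sub_of_hasDerivAt_of_le hr.1 (H.continuousOn_flux.mono hsub)
    (fun s hs => H.hasDerivAt_flux s (Ioo_subset_Ioo_right hr.2 hs))
    (hc.intervalIntegrable_of_Icc hr.1)]
  simp [H.deriv_zero]

theorem green (H₁ : IsRadialLaplacian m p₁ q₁ h₁) (H₂ : IsRadialLaplacian m p₂ q₂ h₂) :
    ∫ r in (0 : ℝ)..1, r ^ m * (p₁ r * h₂ r - p₂ r * h₁ r) = p₁ 1 * q₂ 1 - p₂ 1 * q₁ 1 := by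
  have hW : ContinuousOn (fun r => p₁ r * (r ^ m * q₂ r) - p₂ r * (r ^ m * q₁ r)) (Icc 0 1) :=
    (H₁.continuousOn.mul H₂.continuousOn_flux).sub (H₂.continuousOn.mul H₁.continuousOn_flux)
  have hc : ContinuousOn (fun r => r ^ m * (p₁ r * h₂ r - p₂ r * h₁ r)) (Icc 0 1) :=
    (continuous_pow m).continuousOn.mul ((H₁.continuousOn.mul H₂.continuousOn_lap).sub
      (H₂.continuousOn.mul H₁.continuousOn_lap))
  have hd : ∀ r ∈ Ioo (0 : ℝ) 1,
      HasDerivAt (fun r => p₁ r * (r ^ m * q₂ r) - p₂ r * (r ^ m * q₁ r))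
        (r ^ m * (p₁ r * h₂ r - p₂ r * h₁ r)) r := fun r hr =>
    (((H₁.hasDerivAt r hr).mul (H₂.hasDerivAt_flux r hr)).sub
      ((H₂.hasDerivAt r hr).mul (H₁.hasDerivAt_flux r hr))).congr_deriv (by ring)
  rw [intervalIntegral.integral_eq_sub_of_hasDerivAt_of_le zero_le_one hW hd
    (hc.intervalIntegrable_of_Icc zero_le_one)]
  simp [H₁.deriv_zero, H₂.deriv_zero]

theorem deriv_pos (H : IsRadialLaplacian m p q h) (hpos : ∀ r ∈ Ioo (0 : ℝ) 1, 0 < h r) {r : ℝ}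
    (hr : r ∈ Ioo (0 : ℝ) 1) : 0 < q r := by
  have hmono : StrictMonoOn (fun s => s ^ m * q s) (Icc 0 1) := by
    refine strictMonoOn_of_hasDerivWithinAt_pos (convex_Icc 0 1) H.continuousOn_flux
      (f' := fun s => s ^ m * h s) ?_ ?_ <;> rw [interior_Icc] <;> intro s hs
    · exact (H.hasDerivAt_flux s hs).hasDerivWithinAt
    · exact mul_pos (pow_pos hs.1 m) (hpos s hs)
  have hflux : 0 < r ^ m * q r := by
    simpa [H.deriv_zero] using hmono (left_mem_Icc.2 zero_le_one) (Ioo_subset_Icc_self hr) hr.1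
  exact pos_of_mul_pos_right hflux (pow_pos hr.1 m).le

theorem strictMonoOn (H : IsRadialLaplacian m p q h) (hpos : ∀ r ∈ Ioo (0 : ℝ) 1, 0 < h r) :
    StrictMonoOn p (Icc 0 1) := by
  refine strictMonoOn_of_hasDerivWithinAt_pos (convex_Icc 0 1) H.continuousOn (f' := q) ?_ ?_ <;>
    rw [interior_Icc] <;> intro r hr
  · exact (H.hasDerivAt r hr).hasDerivWithinAt
  · exact H.deriv_pos hpos hr

end IsRadialLaplacian

/-- The radial profile `p` of a solution of the clamped problem `Δ²u = f`, `u = ∂_ν u = 0` on the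
unit sphere of dimension `m + 1`. The functions `q`, `h`, `k` are the profiles of the radial
derivative of `u`, of `Δu` and of the radial derivative of `Δu`. -/
structure IsClampedProfile (m : ℕ) (p q h k f : ℝ → ℝ) : Prop where
  lap : IsRadialLaplacian m p q h
  bilap : IsRadialLaplacian m h k f
  apply_one : p 1 = 0
  deriv_one : q 1 = 0

namespace IsClampedProfile

theorem sub (H₁ : IsClampedProfile m p₁ q₁ h₁ k₁ f₁) (H₂ : IsClampedProfile m p₂ q₂ h₂ k₂ f₂) :
    IsClampedProfile m (p₁ - p₂) (q₁ - q₂) (h₁ - h₂) (k₁ - k₂) (f₁ - f₂) where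
  lap := H₁.lap.sub H₂.lap
  bilap := H₁.bilap.sub H₂.bilap
  apply_one := by simp [H₁.apply_one, H₂.apply_one]
  deriv_one := by simp [H₁.deriv_one, H₂.deriv_one]

theorem integral_mul_sub_mul_eq_zero (H₁ : IsClampedProfile m p₁ q₁ h₁ k₁ f₁)
    (H₂ : IsClampedProfile m p₂ q₂ h₂ k₂ f₂) :
    ∫ r in (0 : ℝ)..1, r ^ m * (p₁ r * f₂ r - p₂ r * f₁ r) = 0 := by
  have hint {p q h h' k f : ℝ → ℝ} (H : IsRadialLaplacian m p q h)
      (H' : IsRadialLaplacian m h' k f) :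
      IntervalIntegrable (fun r => r ^ m * (p r * f r - h' r * h r)) volume 0 1 :=
    ((continuous_pow m).continuousOn.mul ((H.continuousOn.mul H'.continuousOn_lap).sub
      (H'.continuousOn.mul H.continuousOn_lap))).intervalIntegrable_of_Icc zero_le_one
  have key := congrArg₂ (· - ·) (H₁.lap.green H₂.bilap) (H₂.lap.green H₁.bilap)
  simp only [H₁.apply_one, H₂.apply_one, H₁.deriv_one, H₂.deriv_one, zero_mul, mul_zero,
    sub_zero] at key
  rw [← intervalIntegral.integral_sub (hint H₁.lap H₂.bilap) (hint H₂.lap H₁.bilap)] at key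
  rw [← key]
  congr 1 with r
  ring

theorem exists_lap_eq_zero (H : IsClampedProfile m p q h k f) : ∃ c ∈ Ioo (0 : ℝ) 1, h c = 0 := by
  obtain ⟨c, hc, hc0⟩ := exists_hasDerivAt_eq_zero zero_lt_one H.lap.continuousOn_flux
    (by simp [H.lap.deriv_zero, H.deriv_one]) H.lap.hasDerivAt_flux
  exact ⟨c, hc, (mul_eq_zero.1 hc0).resolve_left (pow_pos hc.1 m).ne'⟩

/-- `rᵐ q` vanishes at both ends and its derivative `rᵐ h` changes sign once, from `-` to `+`. -/
theorem deriv_neg (H : IsClampedProfile m p q h k f) (hpos : ∀ r ∈ Ioo (0 : ℝ) 1, 0 < f r) {r : ℝ}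
    (hr : r ∈ Ioo (0 : ℝ) 1) : q r < 0 := by
  obtain ⟨c, hc, hc0⟩ := H.exists_lap_eq_zero
  have hmono := H.bilap.strictMonoOn hpos
  have hcI : c ∈ Icc (0 : ℝ) 1 := Ioo_subset_Icc_self hc
  suffices hflux : r ^ m * q r < 0 from (pos_iff_neg_of_mul_neg hflux).1 (pow_pos hr.1 m)
  rcases le_total r c with hrc | hrc
  · have hanti : StrictAntiOn (fun s => s ^ m * q s) (Icc 0 c) := by
      refine strictAntiOn_of_hasDerivWithinAt_neg (convex_Icc 0 c) (f' := fun s => s ^ m * h s)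
        (H.lap.continuousOn_flux.mono (Icc_subset_Icc_right hc.2.le)) ?_ ?_ <;>
        rw [interior_Icc] <;> intro s hs
      · exact (H.lap.hasDerivAt_flux s ⟨hs.1, hs.2.trans hc.2⟩).hasDerivWithinAt
      · exact mul_neg_of_pos_of_neg (pow_pos hs.1 m)
          (hc0 ▸ hmono ⟨hs.1.le, (hs.2.trans hc.2).le⟩ hcI hs.2)
    simpa [H.lap.deriv_zero] using hanti (left_mem_Icc.2 hc.1.le) ⟨hr.1.le, hrc⟩ hr.1
  · have hmono' : StrictMonoOn (fun s => s ^ m * q s) (Icc c 1) := by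
      refine strictMonoOn_of_hasDerivWithinAt_pos (convex_Icc c 1) (f' := fun s => s ^ m * h s)
        (H.lap.continuousOn_flux.mono (Icc_subset_Icc_left hc.1.le)) ?_ ?_ <;>
        rw [interior_Icc] <;> intro s hs
      · exact (H.lap.hasDerivAt_flux s ⟨hc.1.trans hs.1, hs.2⟩).hasDerivWithinAt
      · exact mul_pos (pow_pos (hc.1.trans hs.1) m)
          (hc0 ▸ hmono hcI ⟨(hc.1.trans hs.1).le, hs.2.le⟩ hs.1)
    simpa [H.deriv_one] using hmono' ⟨hrc, hr.2.le⟩ (right_mem_Icc.2 hc.2.le) hr.2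

theorem strictAntiOn (H : IsClampedProfile m p q h k f) (hpos : ∀ r ∈ Ioo (0 : ℝ) 1, 0 < f r) :
    StrictAntiOn p (Icc 0 1) := by
  refine strictAntiOn_of_hasDerivWithinAt_neg (convex_Icc 0 1) H.lap.continuousOn (f' := q)
    ?_ ?_ <;> rw [interior_Icc] <;> intro r hr
  · exact (H.lap.hasDerivAt r hr).hasDerivWithinAt
  · exact H.deriv_neg hpos hr

end IsClampedProfile

/-- The radial profile `p` of a classical solution of `(P)_λ` in dimension `m + 1`. -/
structure IsSolutionProfile (m : ℕ) (lam : ℝ) (p q h k : ℝ → ℝ) : Prop extends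
    IsClampedProfile m p q h k fun r => lam / (1 - p r) ^ 2 where
  nonneg : ∀ r ∈ Icc (0 : ℝ) 1, 0 ≤ p r
  lt_one : ∀ r ∈ Icc (0 : ℝ) 1, p r < 1

namespace IsSolutionProfile

theorem one_sub_pos (H : IsSolutionProfile m lam p q h k) {r : ℝ} (hr : r ∈ Icc (0 : ℝ) 1) :
    0 < 1 - p r :=
  sub_pos.2 (H.lt_one r hr)

theorem rhs_pos (H : IsSolutionProfile m lam p q h k) (hlam : 0 < lam) :
    ∀ r ∈ Ioo (0 : ℝ) 1, 0 < lam / (1 - p r) ^ 2 := fun _ hr =>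
  div_pos hlam (pow_pos (H.one_sub_pos (Ioo_subset_Icc_self hr)) 2)

theorem antitoneOn (H : IsSolutionProfile m lam p q h k) (hlam : 0 < lam) :
    AntitoneOn p (Icc 0 1) :=
  (H.strictAntiOn (H.rhs_pos hlam)).antitoneOn

theorem continuousOn_mul_inv_cube (H : IsSolutionProfile m lam p q h k) :
    ContinuousOn (fun r => r ^ m * (1 / (1 - p r) ^ 3)) (Icc 0 1) :=
  (continuous_pow m).continuousOn.mul (continuousOn_const.div
    ((continuousOn_const.sub H.lap.continuousOn).pow 3) fun _ hr =>
      pow_ne_zero 3 (H.one_sub_pos hr).ne')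

end IsSolutionProfile

end RadialProfile

section Radial

variable {N : ℕ} {lam : ℝ} {u v : EuclideanSpace ℝ (Fin N) → ℝ}

theorem smul_mem_ball_zero_one {E : Type*} [NormedAddCommGroup E] [NormedSpace ℝ E] {e : E}
    (he : ‖e‖ = 1) {r : ℝ} (hr : r ∈ Ico (0 : ℝ) 1) : r • e ∈ ball 0 1 := by
  simpa [norm_smul, he, abs_of_nonneg hr.1] using hr.2

theorem smul_mem_closedBall_zero_one {E : Type*} [NormedAddCommGroup E] [NormedSpace ℝ E] {e : E}
    (he : ‖e‖ = 1) {r : ℝ} (hr : r ∈ Icc (0 : ℝ) 1) : r • e ∈ closedBall 0 1 := by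
  simpa [norm_smul, he, abs_of_nonneg hr.1] using hr.2

/-- Radial symmetry of a function on the open unit ball. -/
def IsRadialOnBall (v : EuclideanSpace ℝ (Fin N) → ℝ) : Prop :=
  ∀ x ∈ ball (0 : EuclideanSpace ℝ (Fin N)) 1, ∀ y, ‖x‖ = ‖y‖ → v x = v y

theorem isRadialOnBall_of_le_comp
    (h : ∀ R : EuclideanSpace ℝ (Fin N) ≃ₗᵢ[ℝ] EuclideanSpace ℝ (Fin N),
      ∀ x ∈ ball (0 : EuclideanSpace ℝ (Fin N)) 1, v x ≤ v (R x)) : IsRadialOnBall v := by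
  have key {a b : EuclideanSpace ℝ (Fin N)} (ha : a ∈ ball 0 1) (hab : ‖a‖ = ‖b‖) :
      v a ≤ v b := by
    simpa [Submodule.reflection_sub hab] using h (Submodule.span ℝ {a - b})ᗮ.reflection a ha
  intro x hx y hxy
  exact le_antisymm (key hx hxy) (key (by simpa [← hxy] using hx) hxy.symm)

theorem isRadialOnBall_lap (hv : IsRadialOnBall v) (hc : ContDiffOn ℝ 2 v (ball 0 1)) :
    IsRadialOnBall (lap v) := by
  intro x hx y hxy
  obtain ⟨R, rfl⟩ : ∃ R : EuclideanSpace ℝ (Fin N) ≃ₗᵢ[ℝ] EuclideanSpace ℝ (Fin N), R x = y :=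
    ⟨(Submodule.span ℝ {x - y})ᗮ.reflection, Submodule.reflection_sub hxy⟩
  have hRx : R x ∈ ball 0 1 := by simpa using hx
  rw [← lap_comp_linearIsometryEquiv R (hc.contDiffAt (isOpen_ball.mem_nhds hRx))]
  refine lap_congr_nhds ?_
  filter_upwards [isOpen_ball.mem_nhds hx] with z hz
  exact hv z hz _ (R.norm_map z).symm

theorem fderiv_zero_eq_zero_of_even {E F : Type*} [NormedAddCommGroup E] [NormedSpace ℝ E]
    [NormedAddCommGroup F] [NormedSpace ℝ F] {f : E → F} (h : (fun x => f (-x)) =ᶠ[𝓝 0] f) :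
    fderiv ℝ f 0 = 0 := by
  have hneg : fderiv ℝ f 0 = -fderiv ℝ f 0 := by
    simpa [h.fderiv_eq] using fderiv_comp_smul (f := f) (x := 0) (-1 : ℝ)
  have := IsAddTorsionFree.of_isTorsionFree ℝ (E →L[ℝ] F)
  exact self_eq_neg.1 hneg

theorem IsRadialOnBall.fderivWithin_zero (hv : IsRadialOnBall v) :
    fderivWithin ℝ v (closedBall 0 1) 0 = 0 := by
  rw [fderivWithin_of_mem_nhds (closedBall_mem_nhds 0 one_pos)]
  refine fderiv_zero_eq_zero_of_even ?_
  filter_upwards [ball_mem_nhds (0 : EuclideanSpace ℝ (Fin N)) one_pos] with z hz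
  exact (hv z hz _ (norm_neg z).symm).symm

variable {m : ℕ} {w : EuclideanSpace ℝ (Fin (m + 1)) → ℝ} {e : EuclideanSpace ℝ (Fin (m + 1))}

theorem IsRadialOnBall.hasDerivAt_flux (hw : IsRadialOnBall w) (he : ‖e‖ = 1) {q : ℝ → ℝ}
    (hp : ∀ t ∈ Ioo (0 : ℝ) 1, HasDerivAt (fun t : ℝ => w (t • e)) (q t) t) {r : ℝ}
    (hq : DifferentiableAt ℝ q r) (hr : r ∈ Ioo (0 : ℝ) 1) :
    HasDerivAt (fun s => s ^ m * q s) (r ^ m * lap w (r • e)) r := by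
  have hnorm : ‖r • e‖ = r := by simp [norm_smul, he, abs_of_pos hr.1]
  have hne : r • e ≠ 0 := norm_pos_iff.1 (hnorm.symm ▸ hr.1)
  have hpolar : w =ᶠ[𝓝 (r • e)] fun y => w (‖y‖ • e) := by
    filter_upwards [isOpen_ball.mem_nhds (smul_mem_ball_zero_one he (Ioo_subset_Ico_self hr))]
      with y hy
    exact hw y hy _ (by simp [norm_smul, he])
  have hlap := lap_comp_norm (g := fun t => w (t • e)) (g' := q) (g'' := deriv q r) hne
    (by rw [hnorm]; exact eventually_of_mem (isOpen_Ioo.mem_nhds hr) hp)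
    (by rw [hnorm]; exact hq.hasDerivAt)
  rw [← lap_congr_nhds hpolar, hnorm] at hlap
  refine ((hasDerivAt_pow m r).mul hq.hasDerivAt).congr_deriv ?_
  rw [hlap]
  rcases m with _ | m
  · simp
  · have hr0 := hr.1.ne'
    simp only [Nat.cast_add, Nat.cast_one, add_tsub_cancel_right, pow_succ]
    field_simp
    ring

theorem IsRadialOnBall.isRadialLaplacian (hw : IsRadialOnBall w)
    (hc : ContDiffOn ℝ 2 w (closedBall 0 1)) (he : ‖e‖ = 1) :
    IsRadialLaplacian m (fun r => w (r • e))
      (fun r => fderivWithin ℝ w (closedBall 0 1) (r • e) e)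
      (fun r => (Δ[closedBall 0 1] w) (r • e)) := by
  have hU := uniqueDiffOn_closedBall (0 : EuclideanSpace ℝ (Fin (m + 1))) one_pos
  have hmaps : MapsTo (fun r : ℝ => r • e) (Icc 0 1) (closedBall 0 1) :=
    fun r hr => smul_mem_closedBall_zero_one he hr
  have hnhds {r : ℝ} (hr : r ∈ Ioo (0 : ℝ) 1) : closedBall 0 1 ∈ 𝓝 (r • e) :=
    mem_of_superset (isOpen_ball.mem_nhds (smul_mem_ball_zero_one he (Ioo_subset_Ico_self hr)))
      ball_subset_closedBall
  have hsmul : ContDiff ℝ 2 (fun r : ℝ => r • e) := contDiff_id.smul contDiff_const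
  have hq : ContDiffOn ℝ 1 (fun r : ℝ => fderivWithin ℝ w (closedBall 0 1) (r • e) e)
      (Icc 0 1) :=
    ((hc.fderivWithin hU (by norm_num)).comp (hsmul.of_le (by norm_num)).contDiffOn
      hmaps).clm_apply contDiffOn_const
  have hp {r : ℝ} (hr : r ∈ Ioo (0 : ℝ) 1) :
      HasDerivAt (fun r : ℝ => w (r • e)) (fderivWithin ℝ w (closedBall 0 1) (r • e) e) r := by
    rw [fderivWithin_of_mem_nhds (hnhds hr)]
    exact ((hc.contDiffAt (hnhds hr)).differentiableAt two_ne_zero).hasFDerivAt.comp_hasDerivAt r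
      (by simpa using (hasDerivAt_id r).smul_const e)
  refine ⟨hc.continuousOn.comp hsmul.continuous.continuousOn hmaps, hq.continuousOn,
    (contDiffOn_laplacianWithin (n := 0) hU hc).continuousOn.comp hsmul.continuous.continuousOn
      hmaps, by simp [hw.fderivWithin_zero], fun r hr => hp hr, fun r hrI => ?_⟩
  rw [← lap_eqOn_laplacianWithin hU hc (mem_interior_iff_mem_nhds.2 (hnhds hrI))]
  exact hw.hasDerivAt_flux he (fun t ht => hp ht)
    ((hq.contDiffAt (Icc_mem_nhds hrI.1 hrI.2)).differentiableAt one_ne_zero) hrI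

theorem IsClassicalSolution.comp_linearIsometryEquiv (hu : IsClassicalSolution N lam u)
    (R : EuclideanSpace ℝ (Fin N) ≃ₗᵢ[ℝ] EuclideanSpace ℝ (Fin N)) :
    IsClassicalSolution N lam (u ∘ R) := by
  have hb {x} (hx : x ∈ ball (0 : EuclideanSpace ℝ (Fin N)) 1) : R x ∈ ball 0 1 := by simpa using hx
  have hcb : MapsTo R (closedBall 0 1) (closedBall 0 1) := fun x hx => by simpa using hx
  have hub : ContDiffOn ℝ 4 u (ball 0 1) := hu.contDiffOn.mono ball_subset_closedBall
  have hl : ContDiffOn ℝ 2 (lap u) (ball 0 1) := contDiffOn_lap (n := 2) isOpen_ball hub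
  have hlap : EqOn (lap (u ∘ R)) (lap u ∘ R) (ball 0 1) := fun x hx =>
    lap_comp_linearIsometryEquiv R
      ((hub.contDiffAt (isOpen_ball.mem_nhds (hb hx))).of_le (by norm_num))
  refine ⟨hu.contDiffOn.comp R.contDiff.contDiffOn hcb, fun x hx => hu.pos _ (hb hx),
    fun x hx => hu.lt_one _ (hb hx), fun x hx => ?_, fun x hx => hu.bdry _ (by simpa),
    fun x hx => ?_⟩
  · rw [biharm, lap_congr_nhds (hlap.eventuallyEq_of_mem (isOpen_ball.mem_nhds hx)),
      lap_comp_linearIsometryEquiv R (hl.contDiffAt (isOpen_ball.mem_nhds (hb hx)))]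
    exact hu.eqn _ (hb hx)
  · have hRx : R x ∈ closedBall 0 1 := by simp [hx]
    have hd := ((hu.contDiffOn.differentiableOn (by norm_num)) _ hRx).hasFDerivWithinAt.comp x
      R.toContinuousLinearEquiv.hasFDerivAt.hasFDerivWithinAt hcb
    rw [hd.fderivWithin (uniqueDiffOn_closedBall _ one_pos x (by simp [hx]))]
    exact hu.bdry_deriv (R x) (by simpa)

theorem IsClassicalSolution.isSolutionProfile {w : EuclideanSpace ℝ (Fin (m + 1)) → ℝ}
    (hw : IsClassicalSolution (m + 1) lam w) (hr : IsRadialOnBall w) (he : ‖e‖ = 1) :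
    ∃ q h k, IsSolutionProfile m lam (fun r => w (r • e)) q h k := by
  have hU := uniqueDiffOn_closedBall (0 : EuclideanSpace ℝ (Fin (m + 1))) one_pos
  have hwb : ContDiffOn ℝ 4 w (ball 0 1) := hw.contDiffOn.mono ball_subset_closedBall
  have hw2 : ContDiffOn ℝ 2 w (closedBall 0 1) := hw.contDiffOn.of_le (by norm_num)
  have hz : ContDiffOn ℝ 2 (Δ[closedBall 0 1] w) (closedBall 0 1) :=
    contDiffOn_laplacianWithin (n := 2) hU hw.contDiffOn
  have hlap : EqOn (lap w) (Δ[closedBall 0 1] w) (ball 0 1) :=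
    interior_closedBall (0 : EuclideanSpace ℝ (Fin (m + 1))) one_ne_zero ▸
      lap_eqOn_laplacianWithin hU hw2
  have hzr : IsRadialOnBall (Δ[closedBall 0 1] w) := fun x hx y hxy => by
    rw [← hlap hx, ← hlap (by simpa [← hxy] using hx)]
    exact isRadialOnBall_lap hr (hwb.of_le (by norm_num)) x hx y hxy
  have hone : w ((1 : ℝ) • e) = 0 := hw.bdry _ (by simp [he])
  have hrange : ∀ r ∈ Icc (0 : ℝ) 1, 0 ≤ w (r • e) ∧ w (r • e) < 1 := fun r hr => by
    rcases hr.2.lt_or_eq with hr1 | rfl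
    · have hx := smul_mem_ball_zero_one he ⟨hr.1, hr1⟩
      exact ⟨(hw.pos _ hx).le, hw.lt_one _ hx⟩
    · exact ⟨hone.ge, hone.trans_lt one_pos⟩
  have hp := hr.isRadialLaplacian hw2 he
  refine ⟨_, _, _, ⟨hp, (hzr.isRadialLaplacian hz he).congr_lap ?_ fun r hrI => ?_, hone, ?_⟩,
    fun r hr => (hrange r hr).1, fun r hr => (hrange r hr).2⟩
  · exact continuousOn_const.div ((continuousOn_const.sub hp.continuousOn).pow 2) fun r hr =>
      pow_ne_zero 2 (sub_pos.2 (hrange r hr).2).ne'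
  · have hx := smul_mem_ball_zero_one he (Ioo_subset_Ico_self hrI)
    rw [← hw.eqn _ hx, biharm, lap_congr_nhds (hlap.eventuallyEq_of_mem (isOpen_ball.mem_nhds hx))]
    exact (lap_eqOn_laplacianWithin hU hz
      (interior_closedBall (0 : EuclideanSpace ℝ (Fin (m + 1))) one_ne_zero ▸ hx)).symm
  · simpa using hw.bdry_deriv e he

end Radial

section Energy

theorem integral_nonpos_of_integral_antitoneOn_mul_nonpos {a b c : ℝ} (hc : c ∈ Icc a b)
    {w G : ℝ → ℝ} (hw : AntitoneOn w (Icc a b)) (hwc : 0 < w c)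
    (hpos : ∀ x ∈ Ico a c, 0 ≤ G x) (hneg : ∀ x ∈ Icc c b, G x ≤ 0)
    (hG : IntervalIntegrable G volume a b)
    (hwG : IntervalIntegrable (fun x => w x * G x) volume a b)
    (hle : ∫ x in a..b, w x * G x ≤ 0) : ∫ x in a..b, G x ≤ 0 := by
  have hmono : ∫ x in a..b, w c * G x ≤ ∫ x in a..b, w x * G x := by
    refine intervalIntegral.integral_mono_on (hc.1.trans hc.2) (hG.const_mul _) hwG fun x hx => ?_
    rcases lt_or_ge x c with hxc | hcx
    · exact mul_le_mul_of_nonneg_right (hw hx hc hxc.le) (hpos x ⟨hx.1, hxc⟩)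
    · exact mul_le_mul_of_nonpos_right (hw hc hx hcx) (hneg x ⟨hcx, hx.2⟩)
  rw [intervalIntegral.integral_const_mul] at hmono
  exact nonpos_of_mul_nonpos_right (hmono.trans hle) hwc

theorem exists_crossing_of_antitoneOn {p : ℝ → ℝ} {a b y : ℝ} (hab : a < b)
    (hp : AntitoneOn p (Icc a b)) (hc : ContinuousOn p (Icc a b)) (hb : p b < y) :
    ∃ c ∈ Ico a b, (∀ x ∈ Ico a c, y ≤ p x) ∧ ∀ x ∈ Icc c b, p x ≤ y := by
  rcases le_total (p a) y with ha | ha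
  · exact ⟨a, left_mem_Ico.2 hab, by simp, fun x hx =>
      (hp (left_mem_Icc.2 hab.le) hx hx.1).trans ha⟩
  · obtain ⟨c, hcI, rfl⟩ := intermediate_value_Icc' hab.le hc ⟨hb.le, ha⟩
    have hcb : c < b := hcI.2.lt_of_ne fun h => hb.ne (h ▸ rfl)
    exact ⟨c, ⟨hcI.1, hcb⟩, fun x hx => hp ⟨hx.1, hx.2.le.trans hcI.2⟩ hcI hx.2.le,
      fun x hx => hp hcI ⟨hcI.1.trans hx.1, hx.2⟩ hx.1⟩

theorem inv_sq_tangent_le {x y : ℝ} (hx : 0 < x) (hy : 0 < y) :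
    1 / x ^ 2 + 2 * (x - y) / x ^ 3 ≤ 1 / y ^ 2 := by
  have hdiff : 1 / y ^ 2 - (1 / x ^ 2 + 2 * (x - y) / x ^ 3) =
      (x - y) ^ 2 * (x + 2 * y) / (x ^ 3 * y ^ 2) := by
    field_simp
    ring
  rw [← sub_nonneg, hdiff]
  positivity

theorem inv_cube_le {x : ℝ} (hx : 0 < x) : 1 / x ^ 3 ≤ (2 - 3 * x) / x ^ 3 + 4 := by
  have hdiff : (2 - 3 * x) / x ^ 3 + 4 - 1 / x ^ 3 = (2 * x - 1) ^ 2 * (x + 1) / x ^ 3 := by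
    field_simp
    ring
  rw [← sub_nonneg, hdiff]
  positivity

theorem mul_sub_mul_le_sub_of_le {a b l₁ l₂ : ℝ} (ha : 0 ≤ a) (ha1 : a < 1) (hb : b < 1)
    (hl₁ : 0 ≤ l₁) (hl : l₁ ≤ l₂) :
    l₁ * ((b - a) * ((3 * a - 1) / (1 - a) ^ 3)) ≤
      a * (l₂ / (1 - b) ^ 2) - b * (l₁ / (1 - a) ^ 2) := by
  have hX : 0 < 1 - a := sub_pos.2 ha1
  have hY : 0 < 1 - b := sub_pos.2 hb
  have htan : l₁ * (1 / (1 - a) ^ 2 + 2 * ((1 - a) - (1 - b)) / (1 - a) ^ 3) ≤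
      l₂ / (1 - b) ^ 2 :=
    calc _ ≤ l₁ * (1 / (1 - b) ^ 2) := by gcongr; exact inv_sq_tangent_le hX hY
      _ ≤ l₂ / (1 - b) ^ 2 := by rw [mul_one_div]; gcongr
  calc l₁ * ((b - a) * ((3 * a - 1) / (1 - a) ^ 3))
      = a * (l₁ * (1 / (1 - a) ^ 2 + 2 * ((1 - a) - (1 - b)) / (1 - a) ^ 3)) -
          b * (l₁ / (1 - a) ^ 2) := by field_simp; ring
    _ ≤ _ := by gcongr

namespace IsSolutionProfile

variable {m : ℕ} {l₁ l₂ : ℝ} {p₁ q₁ h₁ k₁ p₂ q₂ h₂ k₂ : ℝ → ℝ}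

theorem strictAntiOn_sub (H₁ : IsSolutionProfile m l₁ p₁ q₁ h₁ k₁)
    (H₂ : IsSolutionProfile m l₂ p₂ q₂ h₂ k₂) (hl₁ : 0 < l₁) (hl : l₁ < l₂)
    (hle : ∀ r ∈ Icc (0 : ℝ) 1, p₁ r ≤ p₂ r) : StrictAntiOn (p₂ - p₁) (Icc 0 1) := by
  refine (H₂.toIsClampedProfile.sub H₁.toIsClampedProfile).strictAntiOn fun r hr => sub_pos.2 ?_
  have hrI := Ioo_subset_Icc_self hr
  have h₂ := H₂.one_sub_pos hrI
  have h₁₂ : 1 - p₂ r ≤ 1 - p₁ r := sub_le_sub_left (hle r hrI) 1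
  exact div_lt_div₀ hl (pow_le_pow_left₀ h₂.le h₁₂ 2) (hl₁.trans hl).le (pow_pos h₂ 2)

theorem continuousOn_mul_div_cube (H : IsSolutionProfile m l₁ p₁ q₁ h₁ k₁) :
    ContinuousOn (fun r => r ^ m * ((3 * p₁ r - 1) / (1 - p₁ r) ^ 3)) (Icc 0 1) :=
  (((continuousOn_const (c := (3 : ℝ)).mul H.lap.continuousOn).sub
    (continuousOn_const (c := (1 : ℝ)))).mul H.continuousOn_mul_inv_cube).congr fun r _ => by
      simp only [Pi.mul_apply, Pi.sub_apply]
      ring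

theorem integral_sub_mul_nonpos (H₁ : IsSolutionProfile m l₁ p₁ q₁ h₁ k₁)
    (H₂ : IsSolutionProfile m l₂ p₂ q₂ h₂ k₂) (hl₁ : 0 < l₁) (hl : l₁ ≤ l₂) :
    ∫ r in (0 : ℝ)..1, (p₂ - p₁) r * (r ^ m * ((3 * p₁ r - 1) / (1 - p₁ r) ^ 3)) ≤ 0 := by
  have hgreen := H₁.toIsClampedProfile.integral_mul_sub_mul_eq_zero H₂.toIsClampedProfile
  have hc₁ := (H₂.lap.continuousOn.sub H₁.lap.continuousOn).mul H₁.continuousOn_mul_div_cube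
  have hc₂ := (continuous_pow m).continuousOn.mul
    ((H₁.lap.continuousOn.mul H₂.bilap.continuousOn_lap).sub
      (H₂.lap.continuousOn.mul H₁.bilap.continuousOn_lap))
  refine nonpos_of_mul_nonpos_right (le_of_le_of_eq ?_ hgreen) hl₁
  rw [← intervalIntegral.integral_const_mul]
  refine intervalIntegral.integral_mono_on zero_le_one
    ((hc₁.intervalIntegrable_of_Icc (μ := volume) zero_le_one).const_mul l₁)
    (hc₂.intervalIntegrable_of_Icc zero_le_one) fun r hr => ?_
  calc l₁ * ((p₂ - p₁) r * (r ^ m * ((3 * p₁ r - 1) / (1 - p₁ r) ^ 3)))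
      = r ^ m * (l₁ * ((p₂ r - p₁ r) * ((3 * p₁ r - 1) / (1 - p₁ r) ^ 3))) := by
        rw [Pi.sub_apply]; ring
    _ ≤ _ := mul_le_mul_of_nonneg_left (mul_sub_mul_le_sub_of_le (H₁.nonneg r hr) (H₁.lt_one r hr)
        (H₂.lt_one r hr) hl₁.le hl) (pow_nonneg hr.1 m)

theorem integral_inv_cube_le_four (H₁ : IsSolutionProfile m l₁ p₁ q₁ h₁ k₁)
    (H₂ : IsSolutionProfile m l₂ p₂ q₂ h₂ k₂) (hl₁ : 0 < l₁) (hl : l₁ < l₂)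
    (hle : ∀ r ∈ Icc (0 : ℝ) 1, p₁ r ≤ p₂ r) :
    ∫ r in (0 : ℝ)..1, r ^ m * (1 / (1 - p₁ r) ^ 3) ≤ 4 := by
  have hanti := H₁.strictAntiOn_sub H₂ hl₁ hl hle
  have hG := H₁.continuousOn_mul_div_cube.intervalIntegrable_of_Icc (μ := volume) zero_le_one
  have hwG := ((H₂.lap.continuousOn.sub H₁.lap.continuousOn).mul
    H₁.continuousOn_mul_div_cube).intervalIntegrable_of_Icc (μ := volume) zero_le_one
  obtain ⟨c, hc, hge, hle_third⟩ := exists_crossing_of_antitoneOn one_pos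
    (H₁.antitoneOn hl₁) H₁.lap.continuousOn (y := 1 / 3) (by rw [H₁.apply_one]; norm_num)
  have hnonpos : ∫ r in (0 : ℝ)..1, r ^ m * ((3 * p₁ r - 1) / (1 - p₁ r) ^ 3) ≤ 0 := by
    refine integral_nonpos_of_integral_antitoneOn_mul_nonpos (Ico_subset_Icc_self hc)
      hanti.antitoneOn ?_ (fun r hr => ?_) (fun r hr => ?_) hG hwG
      (H₁.integral_sub_mul_nonpos H₂ hl₁ hl.le)
    · simpa [H₁.apply_one, H₂.apply_one] using
        hanti (Ico_subset_Icc_self hc) (right_mem_Icc.2 zero_le_one) hc.2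
    · have hX := H₁.one_sub_pos ⟨hr.1, (hr.2.trans hc.2).le⟩
      exact mul_nonneg (pow_nonneg hr.1 m)
        (div_nonneg (by linarith [hge r hr]) (pow_pos hX 3).le)
    · have hrI : r ∈ Icc (0 : ℝ) 1 := ⟨hc.1.trans hr.1, hr.2⟩
      exact mul_nonpos_of_nonneg_of_nonpos (pow_nonneg hrI.1 m) (div_nonpos_of_nonpos_of_nonneg
        (by linarith [hle_third r hr]) (pow_pos (H₁.one_sub_pos hrI) 3).le)
  calc ∫ r in (0 : ℝ)..1, r ^ m * (1 / (1 - p₁ r) ^ 3)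
      ≤ ∫ r in (0 : ℝ)..1, (r ^ m * ((3 * p₁ r - 1) / (1 - p₁ r) ^ 3) + 4) := by
        refine intervalIntegral.integral_mono_on zero_le_one
          (H₁.continuousOn_mul_inv_cube.intervalIntegrable_of_Icc zero_le_one)
          (hG.add intervalIntegrable_const) fun r hr => ?_
        have hpt := inv_cube_le (H₁.one_sub_pos hr)
        have hpow : r ^ m ≤ 1 := pow_le_one₀ hr.1 hr.2
        calc r ^ m * (1 / (1 - p₁ r) ^ 3)
            ≤ r ^ m * ((2 - 3 * (1 - p₁ r)) / (1 - p₁ r) ^ 3 + 4) :=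
              mul_le_mul_of_nonneg_left hpt (pow_nonneg hr.1 m)
          _ = r ^ m * ((3 * p₁ r - 1) / (1 - p₁ r) ^ 3) + r ^ m * 4 := by ring
          _ ≤ _ := by linarith
    _ ≤ 4 := by
        rw [intervalIntegral.integral_add hG intervalIntegrable_const]
        simpa using hnonpos

end IsSolutionProfile

end Energy

section PointwiseBound

theorem sub_le_sub_of_hasDerivAt_le {f g f' g' : ℝ → ℝ} {a b : ℝ} (hab : a ≤ b)
    (hf : ContinuousOn f (Icc a b)) (hg : ContinuousOn g (Icc a b))
    (hf' : ∀ x ∈ Ioo a b, HasDerivAt f (f' x) x) (hg' : ∀ x ∈ Ioo a b, HasDerivAt g (g' x) x)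
    (hle : ∀ x ∈ Ioo a b, f' x ≤ g' x) : f b - f a ≤ g b - g a := by
  have hmono : MonotoneOn (g - f) (Icc a b) := by
    refine monotoneOn_of_hasDerivWithinAt_nonneg (convex_Icc a b) (hg.sub hf) (f' := g' - f')
      ?_ ?_ <;> rw [interior_Icc] <;> intro x hx
    · exact ((hg' x hx).sub (hf' x hx)).hasDerivWithinAt
    · exact sub_nonneg.2 (hle x hx)
  have := hmono (left_mem_Icc.2 hab) (right_mem_Icc.2 hab) hab
  simp only [Pi.sub_apply] at this
  linarith

theorem inv_sq_le_mul_inv_cube_add {x t : ℝ} (hx : 0 < x) (ht : 0 < t) :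
    1 / x ^ 2 ≤ t * (1 / x ^ 3) + 1 / t ^ 2 := by
  have hdiff : t * (1 / x ^ 3) + 1 / t ^ 2 - 1 / x ^ 2 =
      ((x + t) * (x - t) ^ 2 + x ^ 2 * t) / (x ^ 3 * t ^ 2) := by
    field_simp
    ring
  rw [← sub_nonneg, hdiff]
  positivity

theorem integral_pow_three_div_add_mul_pow_four {a b : ℝ} (ha : 0 < a) (hb : 0 < b) :
    ∫ r in (0 : ℝ)..1, r ^ 3 / (a + b * r ^ 4) = Real.log ((a + b) / a) / (4 * b) := by
  have hpos (r : ℝ) : 0 < a + b * r ^ 4 := by positivity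
  have hderiv (r : ℝ) : HasDerivAt (fun r => Real.log (a + b * r ^ 4) / (4 * b))
      (r ^ 3 / (a + b * r ^ 4)) r := by
    have hpoly := ((hasDerivAt_pow 4 r).const_mul b).const_add a
    refine ((hpoly.log (hpos r).ne').div_const (4 * b)).congr_deriv ?_
    simp only [Nat.cast_ofNat, Nat.add_one_sub_one]
    field_simp
  have hcont : Continuous fun r : ℝ => r ^ 3 / (a + b * r ^ 4) :=
    (continuous_pow 3).div (by fun_prop) fun r => (hpos r).ne'
  rw [intervalIntegral.integral_eq_sub_of_hasDerivAt (fun r _ => hderiv r)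
    (hcont.intervalIntegrable _ _), ← sub_div, Real.log_div (add_pos ha hb).ne' ha.ne']
  simp

variable {m : ℕ} {lam A J K : ℝ} {p q h k f : ℝ → ℝ}

theorem IsRadialLaplacian.le_deriv_of_le_lap (H : IsRadialLaplacian m p q h) (hA : 0 ≤ A)
    (hh : ∀ r ∈ Ioo (0 : ℝ) 1, -(A * r ^ (-(2 / 3) : ℝ)) ≤ h r) {r : ℝ}
    (hr : r ∈ Ioo (0 : ℝ) 1) : -(3 * A * r ^ (1 / 3 : ℝ)) ≤ q r := by
  have hc : Continuous fun s : ℝ => s ^ m * s ^ (1 / 3 : ℝ) :=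
    (continuous_pow m).mul (Real.continuous_rpow_const (by norm_num))
  have hcmp := sub_le_sub_of_hasDerivAt_le (f := fun s => -(3 * A) * (s ^ m * s ^ (1 / 3 : ℝ)))
    hr.1.le (hc.const_mul _).continuousOn
    (H.continuousOn_flux.mono (Icc_subset_Icc_right hr.2.le))
    (fun s hs => ((hasDerivAt_pow m s).mul
      (Real.hasDerivAt_rpow_const (Or.inl hs.1.ne'))).const_mul _)
    (fun s hs => H.hasDerivAt_flux s ⟨hs.1, hs.2.trans hr.2⟩) fun s hs => by
      have hs0 := hs.1
      have hpow : 0 ≤ 3 * A * ((m * s ^ (m - 1)) * s ^ (1 / 3 : ℝ)) := by positivity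
      have hlap := mul_le_mul_of_nonneg_left (hh s ⟨hs.1, hs.2.trans hr.2⟩) (pow_pos hs0 m).le
      norm_num at hlap hpow ⊢
      linarith
  have hflux : r ^ m * -(3 * A * r ^ (1 / 3 : ℝ)) ≤ r ^ m * q r := by
    rw [H.deriv_zero, Real.zero_rpow (by norm_num)] at hcmp
    linarith
  exact le_of_mul_le_mul_left hflux (pow_pos hr.1 m)

theorem IsRadialLaplacian.sub_le_apply_of_le_deriv (H : IsRadialLaplacian m p q h)
    (hq : ∀ r ∈ Ioo (0 : ℝ) 1, -(A * r ^ (1 / 3 : ℝ)) ≤ q r) {r : ℝ} (hr : r ∈ Ioo (0 : ℝ) 1) :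
    p 0 - 3 / 4 * A * r ^ (4 / 3 : ℝ) ≤ p r := by
  have hc : Continuous fun s : ℝ => s ^ (4 / 3 : ℝ) := Real.continuous_rpow_const (by norm_num)
  have hcmp := sub_le_sub_of_hasDerivAt_le (f := fun s => -(3 / 4 * A) * s ^ (4 / 3 : ℝ))
    hr.1.le (hc.const_mul _).continuousOn (H.continuousOn.mono (Icc_subset_Icc_right hr.2.le))
    (fun s hs => (Real.hasDerivAt_rpow_const (Or.inl hs.1.ne')).const_mul _)
    (fun s hs => H.hasDerivAt s ⟨hs.1, hs.2.trans hr.2⟩) fun s hs => by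
      have hs' := hq s ⟨hs.1, hs.2.trans hr.2⟩
      norm_num at hs' ⊢
      linarith
  rw [Real.zero_rpow (by norm_num)] at hcmp
  linarith

theorem IsClampedProfile.le_lap_of_deriv_le (H : IsClampedProfile m p q h k f)
    (hf : ∀ r ∈ Ioo (0 : ℝ) 1, 0 < f r) (hK : 0 ≤ K)
    (hk : ∀ r ∈ Ioo (0 : ℝ) 1, k r ≤ K * r ^ (-(5 / 3) : ℝ)) {r : ℝ} (hr : r ∈ Ioo (0 : ℝ) 1) :
    -(3 / 2 * K * r ^ (-(2 / 3) : ℝ)) ≤ h r := by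
  obtain ⟨c, hc, hc0⟩ := H.exists_lap_eq_zero
  have hnonneg {s : ℝ} (hs : s ∈ Ioo (0 : ℝ) 1) : 0 ≤ 3 / 2 * K * s ^ (-(2 / 3) : ℝ) :=
    mul_nonneg (by positivity) (Real.rpow_nonneg hs.1.le _)
  rcases le_or_gt r c with hrc | hcr
  · have hI {s : ℝ} (hs : s ∈ Ioo r c) : s ∈ Ioo (0 : ℝ) 1 := ⟨hr.1.trans hs.1, hs.2.trans hc.2⟩
    have hpow (s : ℝ) (hs : 0 < s) :=
      (Real.hasDerivAt_rpow_const (p := -(2 / 3)) (Or.inl hs.ne')).const_mul (-(3 / 2 * K))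
    have hcmp := sub_le_sub_of_hasDerivAt_le hrc
      (H.bilap.continuousOn.mono (Icc_subset_Icc hr.1.le hc.2.le))
      (fun s hs => (hpow s (hr.1.trans_le hs.1)).continuousAt.continuousWithinAt)
      (fun s hs => H.bilap.hasDerivAt s (hI hs)) (fun s hs => hpow s (hr.1.trans hs.1))
      fun s hs => by
        have hs' := hk s (hI hs)
        norm_num at hs' ⊢
        linarith
    linarith [hnonneg hc]
  · have hmono := H.bilap.strictMonoOn hf (Ioo_subset_Icc_self hc) (Ioo_subset_Icc_self hr) hcr
    linarith [hnonneg hr]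

theorem IsClampedProfile.sub_le_apply_of_deriv_lap_le (H : IsClampedProfile m p q h k f)
    (hf : ∀ r ∈ Ioo (0 : ℝ) 1, 0 < f r) (hK : 0 ≤ K)
    (hk : ∀ r ∈ Ioo (0 : ℝ) 1, k r ≤ K * r ^ (-(5 / 3) : ℝ)) {r : ℝ} (hr : r ∈ Ioo (0 : ℝ) 1) :
    p 0 - 27 / 8 * K * r ^ (4 / 3 : ℝ) ≤ p r := by
  have hA : 0 ≤ 3 / 2 * K := by positivity
  have hp := H.lap.sub_le_apply_of_le_deriv
    (fun _ => H.lap.le_deriv_of_le_lap hA fun _ => H.le_lap_of_deriv_le hf hK hk) hr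
  linarith

namespace IsSolutionProfile

theorem inv_cube_nonneg (H : IsSolutionProfile m lam p q h k) {r : ℝ} (hr : r ∈ Icc (0 : ℝ) 1) :
    0 ≤ r ^ m * (1 / (1 - p r) ^ 3) :=
  mul_nonneg (pow_nonneg hr.1 m) (one_div_nonneg.2 (pow_pos (H.one_sub_pos hr) 3).le)

theorem flux_deriv_lap_le (H : IsSolutionProfile m lam p q h k) (hlam : 0 ≤ lam)
    (hJ : ∫ r in (0 : ℝ)..1, r ^ m * (1 / (1 - p r) ^ 3) ≤ J) {r t : ℝ} (hr : r ∈ Icc (0 : ℝ) 1)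
    (ht : 0 < t) : r ^ m * k r ≤ lam * (t * J + r ^ (m + 1) / t ^ 2) := by
  have hsub : Icc 0 r ⊆ Icc (0 : ℝ) 1 := Icc_subset_Icc_right hr.2
  have hcube := (H.continuousOn_mul_inv_cube.mono hsub).intervalIntegrable_of_Icc
    (μ := volume) hr.1
  have hpow := (continuous_pow m).intervalIntegrable (μ := volume) (0 : ℝ) r
  have hrhs := ((continuous_pow m).continuousOn.mul
    (H.bilap.continuousOn_lap.mono hsub)).intervalIntegrable_of_Icc (μ := volume) hr.1
  have hyoung : ∀ s ∈ Icc 0 r, s ^ m * (lam / (1 - p s) ^ 2) ≤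
      lam * t * (s ^ m * (1 / (1 - p s) ^ 3)) + lam / t ^ 2 * s ^ m := fun s hs =>
    calc s ^ m * (lam / (1 - p s) ^ 2) = lam * s ^ m * (1 / (1 - p s) ^ 2) := by ring
      _ ≤ lam * s ^ m * (t * (1 / (1 - p s) ^ 3) + 1 / t ^ 2) :=
        mul_le_mul_of_nonneg_left (inv_sq_le_mul_inv_cube_add (H.one_sub_pos (hsub hs)) ht)
          (mul_nonneg hlam (pow_nonneg hs.1 m))
      _ = _ := by ring
  have hJr : ∫ s in (0 : ℝ)..r, s ^ m * (1 / (1 - p s) ^ 3) ≤ J := by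
    refine (intervalIntegral.integral_mono_interval le_rfl hr.1 hr.2 ?_
      (H.continuousOn_mul_inv_cube.intervalIntegrable_of_Icc zero_le_one)).trans hJ
    exact ae_restrict_of_forall_mem measurableSet_Ioc fun s hs =>
      H.inv_cube_nonneg (Ioc_subset_Icc_self hs)
  have hpowr : ∫ s in (0 : ℝ)..r, s ^ m ≤ r ^ (m + 1) := by
    rw [integral_pow, zero_pow m.succ_ne_zero, sub_zero]
    exact div_le_self (pow_nonneg hr.1 _) (by simp)
  calc r ^ m * k r = ∫ s in (0 : ℝ)..r, s ^ m * (lam / (1 - p s) ^ 2) :=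
        (H.bilap.integral_lap hr).symm
    _ ≤ ∫ s in (0 : ℝ)..r, (lam * t * (s ^ m * (1 / (1 - p s) ^ 3)) + lam / t ^ 2 * s ^ m) :=
        intervalIntegral.integral_mono_on hr.1 hrhs
          ((hcube.const_mul _).add (hpow.const_mul _)) hyoung
    _ = lam * t * (∫ s in (0 : ℝ)..r, s ^ m * (1 / (1 - p s) ^ 3)) +
          lam / t ^ 2 * ∫ s in (0 : ℝ)..r, s ^ m := by
        rw [intervalIntegral.integral_add (hcube.const_mul _) (hpow.const_mul _),
          intervalIntegral.integral_const_mul, intervalIntegral.integral_const_mul]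
    _ ≤ lam * t * J + lam / t ^ 2 * r ^ (m + 1) := by gcongr
    _ = _ := by ring

/-- The choice `t = r ^ ((m + 1) / 3)` balances the two terms of `flux_deriv_lap_le`. -/
theorem deriv_lap_le (hm : m ≤ 3) (H : IsSolutionProfile m lam p q h k) (hlam : 0 ≤ lam)
    (hJ0 : 0 ≤ J) (hJ : ∫ r in (0 : ℝ)..1, r ^ m * (1 / (1 - p r) ^ 3) ≤ J) {r : ℝ}
    (hr : r ∈ Ioo (0 : ℝ) 1) : k r ≤ (J + 1) * lam * r ^ (-(5 / 3) : ℝ) := by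
  have hflux := H.flux_deriv_lap_le hlam hJ (Ioo_subset_Icc_self hr)
    (Real.rpow_pos_of_pos hr.1 ((m + 1) / 3 : ℝ))
  have hexp : (-(5 / 3) : ℝ) ≤ (m + 1) / 3 - m := by
    have : (m : ℝ) ≤ 3 := by exact_mod_cast hm
    linarith
  have hbal : r ^ (m + 1) / (r ^ ((m + 1) / 3 : ℝ)) ^ 2 = r ^ ((m + 1) / 3 : ℝ) := by
    rw [← Real.rpow_natCast (r ^ _), ← Real.rpow_mul hr.1.le, ← Real.rpow_natCast r,
      ← Real.rpow_sub hr.1]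
    congr 1
    push_cast
    ring
  rw [hbal] at hflux
  refine le_of_mul_le_mul_left (a := r ^ m) ?_ (pow_pos hr.1 m)
  calc r ^ m * k r ≤ (J + 1) * lam * r ^ ((m + 1) / 3 : ℝ) := by linarith
    _ = r ^ m * ((J + 1) * lam * r ^ ((m + 1) / 3 - m : ℝ)) := by
        rw [Real.rpow_sub hr.1, Real.rpow_natCast]
        field_simp [(pow_pos hr.1 m).ne']
    _ ≤ r ^ m * ((J + 1) * lam * r ^ (-(5 / 3) : ℝ)) :=
        mul_le_mul_of_nonneg_left (mul_le_mul_of_nonneg_left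
          (Real.rpow_le_rpow_of_exponent_ge hr.1 hr.2.le hexp) (by positivity))
          (pow_nonneg hr.1.le m)

/-- Growth of `1 - p` like `r ^ (4 / 3)` would make `∫ rᵐ (1 - p)⁻³` diverge logarithmically as
`p 0 → 1`, since `m ≤ 3`. -/
theorem cube_mul_exp_neg_le (hm : m ≤ 3) (H : IsSolutionProfile m lam p q h k)
    (hJ : ∫ r in (0 : ℝ)..1, r ^ m * (1 / (1 - p r) ^ 3) ≤ J) {C : ℝ} (hC : 0 < C)
    (hp : ∀ r ∈ Ioo (0 : ℝ) 1, p 0 - C * r ^ (4 / 3 : ℝ) ≤ p r) :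
    C ^ 3 * Real.exp (-(16 * C ^ 3 * J)) ≤ (1 - p 0) ^ 3 := by
  have hX0 : 0 < 1 - p 0 := H.one_sub_pos (left_mem_Icc.2 zero_le_one)
  set a := (1 - p 0) ^ 3 with ha_def
  have ha : 0 < a := pow_pos hX0 3
  have hpos (r : ℝ) : 0 < a + C ^ 3 * r ^ 4 := by positivity
  have hcube : ∀ r ∈ Ioo (0 : ℝ) 1, (1 - p r) ^ 3 ≤ 4 * (a + C ^ 3 * r ^ 4) := fun r hr =>
    have hr43 : 0 ≤ C * r ^ (4 / 3 : ℝ) := mul_nonneg hC.le (Real.rpow_nonneg hr.1.le _)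
    calc (1 - p r) ^ 3 ≤ ((1 - p 0) + C * r ^ (4 / 3 : ℝ)) ^ 3 :=
          pow_le_pow_left₀ (H.one_sub_pos (Ioo_subset_Icc_self hr)).le (by linarith [hp r hr]) 3
      _ ≤ 2 ^ 2 * ((1 - p 0) ^ 3 + (C * r ^ (4 / 3 : ℝ)) ^ 3) := add_pow_le hX0.le hr43 3
      _ = _ := by
          rw [mul_pow, ← Real.rpow_natCast (r ^ _), ← Real.rpow_mul hr.1.le]
          norm_num [ha_def]
  have hcont : Continuous fun r : ℝ => r ^ 3 / (a + C ^ 3 * r ^ 4) :=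
    (continuous_pow 3).div (by fun_prop) fun r => (hpos r).ne'
  have hint : ∫ r in (0 : ℝ)..1, r ^ 3 / (a + C ^ 3 * r ^ 4) / 4 ≤ J := by
    refine (intervalIntegral.integral_mono_on_of_le_Ioo zero_le_one
      ((hcont.div_const 4).intervalIntegrable _ _)
      (H.continuousOn_mul_inv_cube.intervalIntegrable_of_Icc zero_le_one) fun r hr => ?_).trans hJ
    have hX := pow_pos (H.one_sub_pos (Ioo_subset_Icc_self hr)) 3
    calc r ^ 3 / (a + C ^ 3 * r ^ 4) / 4 = r ^ 3 / (4 * (a + C ^ 3 * r ^ 4)) := by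
          rw [div_div, mul_comm 4]
      _ ≤ r ^ m / (1 - p r) ^ 3 := div_le_div₀ (pow_nonneg hr.1.le m)
          (pow_le_pow_of_le_one hr.1.le hr.2.le hm) hX (hcube r hr)
      _ = r ^ m * (1 / (1 - p r) ^ 3) := by rw [mul_one_div]
  rw [intervalIntegral.integral_div, integral_pow_three_div_add_mul_pow_four ha (pow_pos hC 3),
    div_div, div_le_iff₀ (by positivity), Real.log_le_iff_le_exp (by positivity),
    div_le_iff₀ ha] at hint
  rw [Real.exp_neg, ← div_eq_mul_inv, div_le_iff₀ (Real.exp_pos _)]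
  calc C ^ 3 ≤ a + C ^ 3 := le_add_of_nonneg_left ha.le
    _ ≤ _ := hint
    _ = _ := by ring_nf

theorem apply_zero_le (hm : m ≤ 3) (H : IsSolutionProfile m lam p q h k) (hlam : 0 < lam)
    (hJ : ∫ r in (0 : ℝ)..1, r ^ m * (1 / (1 - p r) ^ 3) ≤ J) {C : ℝ}
    (hC : 27 / 8 * ((J + 1) * lam) ≤ C) :
    p 0 ≤ 1 - C ^ 3 * Real.exp (-(16 * C ^ 3 * J)) := by
  have h0 : (0 : ℝ) ∈ Icc (0 : ℝ) 1 := left_mem_Icc.2 zero_le_one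
  have hJ0 : 0 ≤ J :=
    (intervalIntegral.integral_nonneg zero_le_one fun r hr => H.inv_cube_nonneg hr).trans hJ
  have hp : ∀ r ∈ Ioo (0 : ℝ) 1, p 0 - C * r ^ (4 / 3 : ℝ) ≤ p r := fun r hr =>
    calc p 0 - C * r ^ (4 / 3 : ℝ) ≤ p 0 - 27 / 8 * ((J + 1) * lam) * r ^ (4 / 3 : ℝ) :=
          sub_le_sub_left (mul_le_mul_of_nonneg_right hC (Real.rpow_nonneg hr.1.le _)) _
      _ ≤ p r := H.sub_le_apply_of_deriv_lap_le (H.rhs_pos hlam) (by positivity)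
          (fun _ => H.deriv_lap_le hm hlam.le hJ0 hJ) hr
  have hexp := H.cube_mul_exp_neg_le hm hJ (lt_of_lt_of_le (by positivity) hC) hp
  have hcube : (1 - p 0) ^ 3 ≤ 1 - p 0 := pow_le_of_le_one (H.one_sub_pos h0).le
    (sub_le_self 1 (H.nonneg 0 h0)) three_ne_zero
  linarith

end IsSolutionProfile

end PointwiseBound

section MinimalSolutions

variable {N m : ℕ} {lam l₁ l₂ C : ℝ}

theorem IsClassicalSolution.isRadialOnBall_of_minimal {u : EuclideanSpace ℝ (Fin N) → ℝ}
    (hu : IsClassicalSolution N lam u) (hmin : ∀ v, IsClassicalSolution N lam v →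
      ∀ x ∈ ball (0 : EuclideanSpace ℝ (Fin N)) 1, u x ≤ v x) : IsRadialOnBall u :=
  isRadialOnBall_of_le_comp fun R => hmin _ (hu.comp_linearIsometryEquiv R)

theorem IsClassicalSolution.le_one_sub_of_le_of_lt {u₁ u₂ : EuclideanSpace ℝ (Fin (m + 1)) → ℝ}
    (hm : m ≤ 3) (hu₁ : IsClassicalSolution (m + 1) l₁ u₁) (hr₁ : IsRadialOnBall u₁)
    (hu₂ : IsClassicalSolution (m + 1) l₂ u₂) (hr₂ : IsRadialOnBall u₂) (hl₁ : 0 < l₁)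
    (hl : l₁ < l₂) (hle : ∀ x ∈ ball (0 : EuclideanSpace ℝ (Fin (m + 1))) 1, u₁ x ≤ u₂ x)
    (hC : 27 / 8 * ((4 + 1) * l₁) ≤ C) {x : EuclideanSpace ℝ (Fin (m + 1))}
    (hx : x ∈ ball 0 1) : u₁ x ≤ 1 - C ^ 3 * Real.exp (-(16 * C ^ 3 * 4)) := by
  obtain ⟨e, he⟩ : ∃ e : EuclideanSpace ℝ (Fin (m + 1)), ‖e‖ = 1 :=
    ⟨EuclideanSpace.single 0 1, by simp⟩
  obtain ⟨q₁, h₁, k₁, H₁⟩ := hu₁.isSolutionProfile hr₁ he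
  obtain ⟨q₂, h₂, k₂, H₂⟩ := hu₂.isSolutionProfile hr₂ he
  have hle' : ∀ r ∈ Icc (0 : ℝ) 1, u₁ (r • e) ≤ u₂ (r • e) := fun r hr => by
    rcases hr.2.lt_or_eq with hr1 | rfl
    · exact hle _ (smul_mem_ball_zero_one he ⟨hr.1, hr1⟩)
    · exact (H₁.apply_one.trans H₂.apply_one.symm).le
  have hx1 : ‖x‖ ≤ 1 := (mem_ball_zero_iff.1 hx).le
  calc u₁ x = u₁ (‖x‖ • e) := hr₁ x hx _ (by simp [norm_smul, he])
    _ ≤ u₁ ((0 : ℝ) • e) := H₁.antitoneOn hl₁ (left_mem_Icc.2 zero_le_one)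
        ⟨norm_nonneg x, hx1⟩ (norm_nonneg x)
    _ ≤ _ := H₁.apply_zero_le hm hl₁ (H₁.integral_inv_cube_le_four H₂ hl₁ hl hle') hC

end MinimalSolutions

/-- for 1 ≤ N ≤ 4 the extremal solution u* is regular: sup_B u* < 1. -/
theorem extremal_regular_dim_le_four (N : ℕ) (hN₁ : 1 ≤ N) (hN₂ : N ≤ 4)
    (uMin : ℝ → EuclideanSpace ℝ (Fin N) → ℝ)
    (hMin : ∀ lam : ℝ, 0 < lam → lam < sSup (solSet N) →
      IsClassicalSolution N lam (uMin lam) ∧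
        ∀ v, IsClassicalSolution N lam v →
          ∀ x ∈ ball (0 : EuclideanSpace ℝ (Fin N)) 1, uMin lam x ≤ v x)
    (hMono : ∀ x ∈ ball (0 : EuclideanSpace ℝ (Fin N)) 1, ∀ l₁ l₂ : ℝ,
      0 < l₁ → l₁ ≤ l₂ → l₂ < sSup (solSet N) → uMin l₁ x ≤ uMin l₂ x)
    (uStar : EuclideanSpace ℝ (Fin N) → ℝ)
    (hStar : ∀ x ∈ ball (0 : EuclideanSpace ℝ (Fin N)) 1,
      Tendsto (fun lam => uMin lam x) (nhdsWithin (sSup (solSet N)) (Iio (sSup (solSet N))))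
        (nhds (uStar x)))
    :
    sSup (uStar '' ball (0 : EuclideanSpace ℝ (Fin N)) 1) < 1 := by
  obtain ⟨m, rfl⟩ : ∃ m, N = m + 1 := ⟨N - 1, by omega⟩
  set L := sSup (solSet (m + 1))
  obtain ⟨l₀, hl₀⟩ := solSet_nonempty (m + 1) hN₁
  have hL : 0 < L := hl₀.1.trans_le (le_csSup (bddAbove_solSet _) hl₀)
  have hrad {l} (h0 : 0 < l) (hlL : l < L) : IsRadialOnBall (uMin l) :=
    (hMin l h0 hlL).1.isRadialOnBall_of_minimal (hMin l h0 hlL).2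
  set C := 27 / 8 * ((4 + 1) * L) with hC
  set δ := C ^ 3 * Real.exp (-(16 * C ^ 3 * 4))
  have hbound : ∀ l ∈ Ioo 0 L, ∀ x ∈ ball 0 1, uMin l x ≤ 1 - δ := fun l hl x hx => by
    obtain ⟨l', hll', hl'L⟩ := exists_between hl.2
    have hl'0 := hl.1.trans hll'
    have hlC : 27 / 8 * ((4 + 1) * l) ≤ C := by rw [hC]; linarith [hl.2]
    exact (hMin l hl.1 hl.2).1.le_one_sub_of_le_of_lt (by omega) (hrad hl.1 hl.2)
      (hMin l' hl'0 hl'L).1 (hrad hl'0 hl'L) hl.1 hll'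
      (fun y hy => hMono y hy l l' hl.1 hll'.le hl'L) hlC hx
  have hstar : ∀ x ∈ ball 0 1, uStar x ≤ 1 - δ := fun x hx =>
    le_of_tendsto (hStar x hx) <| by
      filter_upwards [Ioo_mem_nhdsLT hL] with l hl using hbound l hl x hx
  have hδ0 : 0 < δ := by positivity
  calc sSup (uStar '' ball 0 1) ≤ 1 - δ :=
        csSup_le (nonempty_ball.2 one_pos |>.image _) (forall_mem_image.2 hstar)
    _ < 1 := sub_lt_self 1 hδ0
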